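/- arXiv:1902.09034 — 2 statements merged into one kernel-verified Lean document; each statement's English description precedes it below -/
import Mathlib

section
/- Let α ∈ 𝕀 be an irrational power series. Then there exists ε > 0 such that Bad^ε(α) has Hausdorff dimension 1 if and only if α is singular on average. -/
/-!
Common setup: the field `𝔽_q((z⁻¹))` of formal power series over a finite field `K` of
cardinality `q`, modeled as the field `FF K` of formal Laurent series in `t = z⁻¹`,
together with its non-Archimedean norm, the embedding of the polynomial ring `𝔽_q[z]`,
distances to polynomial (vectors), Diophantine exponents, `Bad` sets, continued fractions
and best approximation sequences.
-/

open scoped Classical ENNReal NNReal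
open Filter

noncomputable section


namespace FPSDA

variable (K : Type*) [Field K] [Fintype K]

/-- The field `𝔽_q((z⁻¹))` of formal power series in `z⁻¹` over the finite field `K = 𝔽_q`,
modeled as the field of formal Laurent series in the variable `t = z⁻¹`. -/
def FF : Type _ := LaurentSeries K

instance : Field (FF K) := inferInstanceAs (Field (LaurentSeries K))

variable {K}

/-- The identity map, viewing an element of `𝔽_q((z⁻¹))` as a Laurent series in `t = z⁻¹`. -/
def toL (x : FF K) : LaurentSeries K := x

@[simp] lemma toL_zero : toL (0 : FF K) = 0 := rfl
@[simp] lemma toL_add (x y : FF K) : toL (x + y) = toL x + toL y := rfl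
@[simp] lemma toL_neg (x : FF K) : toL (-x) = -toL x := rfl
@[simp] lemma toL_sub (x y : FF K) : toL (x - y) = toL x - toL y := rfl
lemma toL_eq_zero {x : FF K} : toL x = 0 ↔ x = 0 := Iff.rfl

/-- The norm `‖x‖ = q ^ (deg x)` on `𝔽_q((z⁻¹))`, where
`deg x = - (order of x as a Laurent series in z⁻¹)`; `‖0‖ = 0`. -/
def fnorm (x : FF K) : ℝ :=
  if toL x = 0 then 0 else (Fintype.card K : ℝ) ^ (-(toL x).order)

lemma one_le_q : (1 : ℝ) ≤ (Fintype.card K : ℝ) := by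
  exact_mod_cast Fintype.card_pos

lemma fnorm_nonneg (x : FF K) : 0 ≤ fnorm x := by
  unfold fnorm
  split_ifs
  · exact le_refl 0
  · exact zpow_nonneg (by positivity) _

lemma fnorm_eq_zero {x : FF K} : fnorm x = 0 ↔ x = 0 := by
  unfold fnorm
  split_ifs with h
  · exact ⟨fun _ => toL_eq_zero.mp h, fun _ => rfl⟩
  · constructor
    · intro hc
      exact absurd hc (zpow_ne_zero _ (by
        have h0 : (0:ℝ) < (Fintype.card K : ℝ) := by positivity
        exact ne_of_gt h0))
    · intro hc
      exact absurd (toL_eq_zero.mpr hc) h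

lemma fnorm_neg (x : FF K) : fnorm (-x) = fnorm x := by
  unfold fnorm
  rw [toL_neg]
  simp [neg_eq_zero, HahnSeries.order_neg]

lemma fnorm_add_le (x y : FF K) : fnorm (x + y) ≤ max (fnorm x) (fnorm y) := by
  by_cases hxy : x + y = 0
  · rw [fnorm_eq_zero.mpr hxy]
    exact le_max_of_le_left (fnorm_nonneg x)
  by_cases hx : x = 0
  · rw [hx, zero_add]
    exact le_max_right _ _
  by_cases hy : y = 0
  · rw [hy, add_zero]
    exact le_max_left _ _
  have horder : min (toL x).order (toL y).order ≤ (toL (x + y)).order := by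
    rw [toL_add]
    exact HahnSeries.min_order_le_order_add (show toL x + toL y ≠ 0 from hxy)
  have h1 : fnorm (x + y) = (Fintype.card K : ℝ) ^ (-(toL (x+y)).order) := by
    unfold fnorm
    rw [if_neg (show toL (x + y) ≠ 0 from hxy)]
  rcases le_total (toL x).order (toL y).order with h | h
  · have h2 : (toL x).order ≤ (toL (x+y)).order := le_trans (by simp [min_eq_left h]) horder
    refine le_max_of_le_left ?_
    rw [h1]
    unfold fnorm
    rw [if_neg (show toL x ≠ 0 from hx)]
    exact zpow_le_zpow_right₀ one_le_q (by omega)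
  · have h2 : (toL y).order ≤ (toL (x+y)).order := le_trans (by simp [min_eq_right h]) horder
    refine le_max_of_le_right ?_
    rw [h1]
    unfold fnorm
    rw [if_neg (show toL y ≠ 0 from hy)]
    exact zpow_le_zpow_right₀ one_le_q (by omega)

/-- The (ultra)metric `dist x y = ‖x - y‖` on `𝔽_q((z⁻¹))`. -/
instance : MetricSpace (FF K) where
  dist x y := fnorm (x - y)
  dist_self x := by
    show fnorm (x - x) = 0
    rw [sub_self]
    exact fnorm_eq_zero.mpr rfl
  dist_comm x y := by
    show fnorm (x - y) = fnorm (y - x)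
    have h : x - y = -(y - x) := by ring
    rw [h, fnorm_neg]
  dist_triangle x y z := by
    show fnorm (x - z) ≤ fnorm (x - y) + fnorm (y - z)
    have h : x - z = (x - y) + (y - z) := by ring
    calc fnorm (x - z) ≤ max (fnorm (x - y)) (fnorm (y - z)) := by
          rw [h]; exact fnorm_add_le _ _
      _ ≤ fnorm (x - y) + fnorm (y - z) :=
        max_le (le_add_of_nonneg_right (fnorm_nonneg _)) (le_add_of_nonneg_left (fnorm_nonneg _))
  eq_of_dist_eq_zero := by
    intro x y h
    have h' : x - y = 0 := fnorm_eq_zero.mp h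
    exact sub_eq_zero.mp h'

instance : MeasurableSpace (FF K) := borel _
instance : BorelSpace (FF K) := ⟨rfl⟩

/-- The canonical embedding of the polynomial ring `𝔽_q[z]` into `𝔽_q((z⁻¹))`:
the variable `z` is sent to `t⁻¹ = single (-1) 1`. -/
def polyF (P : Polynomial K) : FF K :=
  Polynomial.aeval (HahnSeries.single (-1 : ℤ) (1 : K)) P

/-- Supremum norm of a vector with entries in `𝔽_q((z⁻¹))`. -/
def vnorm {ι : Type*} [Fintype ι] (v : ι → FF K) : ℝ := ⨆ i, fnorm (v i)

/-- `⟨v⟩`, the distance from the vector `v` to the nearest polynomial vector. -/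
def vdist {ι : Type*} [Fintype ι] (v : ι → FF K) : ℝ :=
  ⨅ y : ι → Polynomial K, vnorm (fun i => v i - polyF (y i))

/-- `⟨x⟩`, the distance from the scalar `x` to the nearest polynomial. -/
def sdist (x : FF K) : ℝ := ⨅ y : Polynomial K, fnorm (x - polyF y)

/-- The fractional part `{x} = Σ_{i ≥ 1} a_i z^{-i}` of `x = Σ_i a_i z^{-i}`. -/
def fracPart (x : FF K) : FF K :=
  (⟨fun i => if 1 ≤ i then (toL x).coeff i else 0, (toL x).isPWO_support'.mono (by
      intro i hi
      by_cases h : (1:ℤ) ≤ i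
      · simpa [Function.mem_support, h] using hi
      · simp [Function.mem_support, h] at hi)⟩ : LaurentSeries K)

/-- The integer part `[x] = Σ_{i ≤ 0} a_i z^{-i}` of `x = Σ_i a_i z^{-i}`, as a polynomial
in `z`. -/
def intPoly (x : FF K) : Polynomial K :=
  ∑ i ∈ Finset.range ((-(toL x).order).toNat + 1),
    Polynomial.monomial i ((toL x).coeff (-(i : ℤ)))

/-- `x ∈ 𝔽_q((z⁻¹))` is irrational if it is not in `𝔽_q(z)`, i.e. is not a ratio of two
polynomials in `z`. -/
def FIrrational (x : FF K) : Prop :=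
  ∀ P Q : Polynomial K, Q ≠ 0 → x * polyF Q ≠ polyF P

section Exponents

variable {m n : ℕ}

/-- The norm `‖x‖ = max_j ‖x_j‖` of a polynomial vector `x`. -/
def pnorm {ι : Type*} [Fintype ι] (x : ι → Polynomial K) : ℝ :=
  vnorm (fun i => (polyF (x i) : FF K))

/-- The system `⟨A x - θ⟩ ≤ H^{-ω}`, `‖x‖ ≤ H` has a polynomial solution `x`. -/
def Solv (A : Matrix (Fin n) (Fin m) (FF K)) (θ : Fin n → FF K) (ω H : ℝ) : Prop :=
  ∃ x : Fin m → Polynomial K,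
    vdist (A.mulVec (fun j => polyF (x j)) - θ) ≤ H ^ (-ω) ∧ pnorm x ≤ H

/-- The system `⟨A x⟩ ≤ H^{-ω}`, `‖x‖ ≤ H` has a nonzero polynomial solution `x`. -/
def SolvHom (A : Matrix (Fin n) (Fin m) (FF K)) (ω H : ℝ) : Prop :=
  ∃ x : Fin m → Polynomial K, x ≠ 0 ∧
    vdist (A.mulVec (fun j => polyF (x j))) ≤ H ^ (-ω) ∧ pnorm x ≤ H

/-- The inhomogeneous exponent `ω(A, θ)`: the supremum (in `[0,∞]`) of all `ω` such that
for arbitrarily large `H` the system `⟨A x - θ⟩ ≤ H^{-ω}`, `‖x‖ ≤ H` has a polynomial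
solution. -/
def omegaInhom (A : Matrix (Fin n) (Fin m) (FF K)) (θ : Fin n → FF K) : ℝ≥0∞ :=
  ⨆ (ω : ℝ) (_ : ∀ H₀ : ℝ, ∃ H : ℝ, H₀ ≤ H ∧ Solv A θ ω H), ENNReal.ofReal ω

/-- The uniform inhomogeneous exponent `ω̂(A, θ)`: as `ω(A, θ)`, but with a solution for
all sufficiently large `H`. -/
def omegaHatInhom (A : Matrix (Fin n) (Fin m) (FF K)) (θ : Fin n → FF K) : ℝ≥0∞ :=
  ⨆ (ω : ℝ) (_ : ∃ H₀ : ℝ, ∀ H : ℝ, H₀ ≤ H → Solv A θ ω H), ENNReal.ofReal ω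

/-- The homogeneous exponent `ω(A)`. -/
def omegaHom (A : Matrix (Fin n) (Fin m) (FF K)) : ℝ≥0∞ :=
  ⨆ (ω : ℝ) (_ : ∀ H₀ : ℝ, ∃ H : ℝ, H₀ ≤ H ∧ SolvHom A ω H), ENNReal.ofReal ω

/-- The uniform homogeneous exponent `ω̂(A)`. -/
def omegaHatHom (A : Matrix (Fin n) (Fin m) (FF K)) : ℝ≥0∞ :=
  ⨆ (ω : ℝ) (_ : ∃ H₀ : ℝ, ∀ H : ℝ, H₀ ≤ H → SolvHom A ω H), ENNReal.ofReal ω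

/-- `A` is non-degenerate: the `𝔽_q[z]`-module `Aᵀ 𝔽_q[z]ⁿ + 𝔽_q[z]^m ⊆ 𝔽_q((z⁻¹))^m` has
rank `m + n` over `𝔽_q[z]`, i.e. its `m + n` natural generators are linearly independent
over `𝔽_q[z]`; equivalently, no nonzero polynomial vector `u` makes `Aᵀ u` a polynomial
vector. -/
def Nondegenerate (A : Matrix (Fin n) (Fin m) (FF K)) : Prop :=
  ∀ u : Fin n → Polynomial K,
    (∃ v : Fin m → Polynomial K,
      A.transpose.mulVec (fun i => polyF (u i)) = fun j => polyF (v j)) → u = 0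

/-- `liminf_{x ∈ 𝔽_q[z]^m, ‖x‖ → ∞} ‖x‖^{m/n} ⟨A x - θ⟩`, computed in `[0, ∞]`. -/
def badLiminf (A : Matrix (Fin n) (Fin m) (FF K)) (θ : Fin n → FF K) : ℝ≥0∞ :=
  Filter.liminf
    (fun x : Fin m → Polynomial K =>
      ENNReal.ofReal ((pnorm x) ^ ((m : ℝ) / (n : ℝ)) *
        vdist (A.mulVec (fun j => polyF (x j)) - θ)))
    (Filter.comap (fun x : Fin m → Polynomial K => pnorm x) Filter.atTop)

/-- The set `Bad^ε(A)` of `θ` in the unit polydisc `𝕀ⁿ` with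
`liminf_{‖x‖ → ∞} ‖x‖^{m/n} ⟨A x - θ⟩ ≥ ε`. -/
def Bad (A : Matrix (Fin n) (Fin m) (FF K)) (ε : ℝ) : Set (Fin n → FF K) :=
  {θ | (∀ i, fnorm (θ i) < 1) ∧ ENNReal.ofReal ε ≤ badLiminf A θ}

/-- The set `Bad(A) = ⋃_{ε > 0} Bad^ε(A)`. -/
def BadAll (A : Matrix (Fin n) (Fin m) (FF K)) : Set (Fin n → FF K) :=
  ⋃ (ε : ℝ) (_ : 0 < ε), Bad A ε

/-- `M(y) = ⟨Aᵀ y⟩` for a polynomial vector `y`. -/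
def Mfun (A : Matrix (Fin n) (Fin m) (FF K)) (y : Fin n → Polynomial K) : ℝ :=
  vdist (A.transpose.mulVec (fun i => polyF (y i)))

/-- `y 1, y 2, …` is a sequence of best approximations related to `Aᵀ`:
`1 = Y_1 < Y_2 < ⋯`, `M_1 > M_2 > ⋯`, and `M(x) ≥ M_k` for every nonzero polynomial
vector `x` with `‖x‖ < Y_{k+1}` (the value `y 0` is irrelevant). -/
def IsBestApproxSeq (A : Matrix (Fin n) (Fin m) (FF K))
    (y : ℕ → Fin n → Polynomial K) : Prop :=
  pnorm (y 1) = 1 ∧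
  (∀ k, 1 ≤ k → pnorm (y k) < pnorm (y (k + 1))) ∧
  (∀ k, 1 ≤ k → Mfun A (y (k + 1)) < Mfun A (y k)) ∧
  (∀ k, 1 ≤ k → ∀ x : Fin n → Polynomial K, x ≠ 0 → pnorm x < pnorm (y (k + 1)) →
    Mfun A (y k) ≤ Mfun A x)

end Exponents

section Scalar

/-- The system `⟨ξ x - θ⟩ ≤ H^{-ω}`, `‖x‖ ≤ H` has a polynomial solution `x`. -/
def sSolv (ξ θ : FF K) (ω H : ℝ) : Prop :=
  ∃ x : Polynomial K, sdist (ξ * polyF x - θ) ≤ H ^ (-ω) ∧ fnorm (polyF x) ≤ H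

/-- The scalar inhomogeneous exponent `ω((ξ), θ)`. -/
def somegaInhom (ξ θ : FF K) : ℝ≥0∞ :=
  ⨆ (ω : ℝ) (_ : ∀ H₀ : ℝ, ∃ H : ℝ, H₀ ≤ H ∧ sSolv ξ θ ω H), ENNReal.ofReal ω

/-- The scalar uniform inhomogeneous exponent `ω̂((ξ), θ)`. -/
def somegaHatInhom (ξ θ : FF K) : ℝ≥0∞ :=
  ⨆ (ω : ℝ) (_ : ∃ H₀ : ℝ, ∀ H : ℝ, H₀ ≤ H → sSolv ξ θ ω H), ENNReal.ofReal ω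

/-- The scalar homogeneous exponent `ω((ξ))`. -/
def somegaHom (ξ : FF K) : ℝ≥0∞ :=
  ⨆ (ω : ℝ) (_ : ∀ H₀ : ℝ, ∃ H : ℝ, H₀ ≤ H ∧ ∃ x : Polynomial K, x ≠ 0 ∧
      sdist (ξ * polyF x) ≤ H ^ (-ω) ∧ fnorm (polyF x) ≤ H), ENNReal.ofReal ω

/-- `liminf_{x ∈ 𝔽_q[z], ‖x‖ → ∞} ‖x‖ ⟨α x - θ⟩`, computed in `[0, ∞]`. -/
def sBadLiminf (α θ : FF K) : ℝ≥0∞ :=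
  Filter.liminf
    (fun x : Polynomial K => ENNReal.ofReal (fnorm (polyF x) * sdist (α * polyF x - θ)))
    (Filter.comap (fun x : Polynomial K => fnorm (polyF x)) Filter.atTop)

/-- The set `Bad^ε(α)` of `θ ∈ 𝕀` with `liminf_{‖x‖ → ∞} ‖x‖ ⟨α x - θ⟩ ≥ ε`. -/
def sBad (α : FF K) (ε : ℝ) : Set (FF K) :=
  {θ | fnorm θ < 1 ∧ ENNReal.ofReal ε ≤ sBadLiminf α θ}

end Scalar

section CF

/-- The Gauss map `T x = 1/x - [1/x]` on `𝔽_q((z⁻¹))`. -/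
def gaussMap (x : FF K) : FF K := fracPart x⁻¹

/-- `pquot α k` is the `(k+1)`-st partial quotient `A_{k+1} = [1 / T^k α]` of the
continued fraction expansion of `α`. -/
def pquot (α : FF K) (k : ℕ) : Polynomial K := intPoly ((gaussMap^[k] α)⁻¹)

/-- `cfQ α k` is the denominator `Q_k` of the `k`-th convergent of the continued fraction
expansion of `α`: `Q_0 = 1`, `Q_1 = A_1`, `Q_{k+2} = A_{k+2} Q_{k+1} + Q_k`. -/
def cfQ (α : FF K) : ℕ → Polynomial K
  | 0 => 1
  | 1 => pquot α 0
  | (k + 2) => pquot α (k + 1) * cfQ α (k + 1) + cfQ α k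

/-- `α` is singular on average: for every `c > 0` the proportion of `l ∈ {1, …, N}` for
which `‖{Q α}‖ ≤ c 2^{-l}` has a solution `Q ∈ 𝔽_q[z]` with `0 < ‖Q‖ ≤ 2^l` tends to `1`
as `N → ∞`. -/
def SingularOnAverage (α : FF K) : Prop :=
  ∀ c : ℝ, 0 < c →
    Filter.Tendsto
      (fun N : ℕ =>
        (((Finset.Icc 1 N).filter (fun l : ℕ =>
            ∃ Q : Polynomial K, Q ≠ 0 ∧ fnorm (polyF Q) ≤ 2 ^ l ∧
              fnorm (fracPart (polyF Q * α)) ≤ c / 2 ^ l)).card : ℝ) / (N : ℝ))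
      Filter.atTop (nhds 1)

end CF

end FPSDA

open FPSDA MeasureTheory

/-!
Let `S` be the set of degrees of the denominators of the convergents of `α`; these are the sizes of
the nonsingular Hankel matrices of the digits of `α`. Comparing the powers of `2` with the powers of
`q`, `α` is singular on average exactly when `S` has natural density zero.

If `S` has density zero, the digits of `θ` off `S` may be prescribed freely while each digit in `S`
is chosen so that `Q θ` has a nonzero first digit for the convergent denominator `Q` of that degree.
Since `Q (α x - θ) = x (Q α) - Q θ`, such a `θ` is badly approximable, and reading the free digits
in base `q` maps these `θ` onto `[0, 1]` by a map which is Hölder of every exponent less than `1`.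

If `S` does not have density zero, then for every `d ∈ S` each word of length `d` begins the
fractional part of `x α` for some monic `x` of degree `d`, so in the expansion of a badly
approximable `θ` at least one continuation of each prefix of length `d` by `m` digits is forbidden.
Infinitely often this costs a positive proportion of the entropy, and the dimension drops below `1`.
-/

namespace FPSDA

open Asymptotics

section Density

/-- `S` has natural density zero: `S` has `o(N)` elements below `N`. -/
def HasDensityZero (S : Set ℕ) : Prop :=
  (fun N : ℕ ↦ (Nat.count (· ∈ S) N : ℝ)) =o[atTop] fun N : ℕ ↦ (N : ℝ)

variable {S T : Set ℕ}

lemma hasDensityZero_preimage_succ : HasDensityZero {n | n + 1 ∈ S} ↔ HasDensityZero S := by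
  have hbounded : (fun N : ℕ ↦ ((if N ∈ S then 1 else 0) - (if 0 ∈ S then 1 else 0) : ℝ))
      =o[atTop] fun N : ℕ ↦ (N : ℝ) := by
    refine IsBigO.trans_isLittleO (g := fun _ ↦ (1 : ℝ)) (IsBigO.of_bound 1 ?_)
      (isLittleO_const_id_atTop (1 : ℝ) |>.comp_tendsto tendsto_natCast_atTop_atTop)
    exact Eventually.of_forall fun N ↦ by split_ifs <;> norm_num
  have hcount (N : ℕ) : (Nat.count (· ∈ {n | n + 1 ∈ S}) N : ℝ) =
      Nat.count (· ∈ S) N + ((if N ∈ S then 1 else 0) - (if 0 ∈ S then 1 else 0)) := by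
    have h := (Nat.count_succ' (· ∈ S) N).symm.trans (Nat.count_succ (· ∈ S) N)
    rw [add_sub, eq_sub_iff_add_eq]
    exact_mod_cast h
  simp only [HasDensityZero, hcount]
  exact hbounded.add_iff_left

lemma card_le_of_forall_lt_add {s : Finset ℕ} {k : ℕ} (h : ∀ a ∈ s, ∀ b ∈ s, b < a + k) :
    s.card ≤ k := by
  obtain rfl | hs := s.eq_empty_or_nonempty
  · simp
  have hsub : s ⊆ Finset.Ico (s.min' hs) (s.min' hs + k) := fun b hb ↦
    Finset.mem_Ico.2 ⟨s.min'_le b hb, h _ (s.min'_mem hs) b hb⟩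
  simpa using Finset.card_le_card hsub

lemma count_le_mul_count_of_mapsTo {φ : ℕ → ℕ} {C k : ℕ} (hφ : Set.MapsTo φ T S)
    (hC : ∀ t ∈ T, φ t ≤ C * (t + 1)) (hk : ∀ t ∈ T, ∀ t' ∈ T, φ t = φ t' → t' < t + k) (N : ℕ) :
    Nat.count (· ∈ T) N ≤ k * Nat.count (· ∈ S) ((C + 1) * N) := by
  rw [Nat.count_eq_card_filter_range, Nat.count_eq_card_filter_range]
  refine (Finset.card_le_mul_card_image_of_maps_to (f := φ) ?_ k ?_)
  · simp only [Finset.mem_filter, Finset.mem_range, and_imp]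
    exact fun t ht htT ↦ ⟨by nlinarith [hC t htT], hφ htT⟩
  · refine fun b _ ↦ card_le_of_forall_lt_add ?_
    simp only [Finset.mem_filter, and_imp]
    exact fun t _ ht htb t' _ ht' htb' ↦ hk t ht t' ht' (htb.trans htb'.symm)

lemma HasDensityZero.of_mapsTo (hS : HasDensityZero S) {φ : ℕ → ℕ} {C k : ℕ}
    (hφ : Set.MapsTo φ T S) (hC : ∀ t ∈ T, φ t ≤ C * (t + 1))
    (hk : ∀ t ∈ T, ∀ t' ∈ T, φ t = φ t' → t' < t + k) : HasDensityZero T := by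
  have hdilate : Tendsto (fun N ↦ (C + 1) * N) atTop atTop :=
    tendsto_id.const_mul_atTop' (by lia)
  have hlinear : ((fun N : ℕ ↦ (N : ℝ)) ∘ fun N ↦ (C + 1) * N) =O[atTop] fun N : ℕ ↦ (N : ℝ) :=
    IsBigO.of_bound (C + 1) (Eventually.of_forall fun N ↦ by
      simp [abs_of_nonneg (show (0 : ℝ) ≤ C + 1 by positivity)])
  refine IsBigO.trans_isLittleO (IsBigO.of_bound k (Eventually.of_forall fun N ↦ ?_))
    ((hS.comp_tendsto hdilate).trans_isBigO hlinear)
  simp only [Function.comp_apply, Real.norm_natCast]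
  exact_mod_cast count_le_mul_count_of_mapsTo hφ hC hk N

lemma HasDensityZero.exists_count_le (hS : HasDensityZero S) {η : ℝ} (hη : 0 < η) :
    ∃ C : ℕ, ∀ n : ℕ, (Nat.count (· ∈ S) n : ℝ) ≤ η * n + C := by
  obtain ⟨C, hC⟩ := eventually_atTop.1 (hS.def hη)
  refine ⟨C, fun n ↦ ?_⟩
  obtain hn | hn := le_total C n
  · simpa using (hC n hn).trans (le_add_of_nonneg_right C.cast_nonneg)
  · have : (Nat.count (· ∈ S) n : ℝ) ≤ C := by exact_mod_cast (Nat.count_le _).trans hn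
    nlinarith [n.cast_nonneg (α := ℝ)]

lemma count_add_count_compl (S : Set ℕ) (n : ℕ) :
    Nat.count (· ∈ S) n + Nat.count (· ∈ Sᶜ) n = n := by
  simp only [Nat.count_eq_card_filter_range, Set.mem_compl_iff,
    Finset.card_filter_add_card_filter_not, Finset.card_range]

lemma HasDensityZero.infinite_compl (hS : HasDensityZero S) : Sᶜ.Infinite := by
  intro hfin
  obtain ⟨C, hC⟩ := hS.exists_count_le (η := 1 / 2) (by norm_num)
  have hcompl : Nat.count (· ∈ Sᶜ) (2 * C + 2 * hfin.toFinset.card + 1) ≤ hfin.toFinset.card := by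
    rw [Nat.count_eq_card_filter_range]
    exact Finset.card_le_card fun n hn ↦ hfin.mem_toFinset.2 (Finset.mem_filter.1 hn).2
  have hsum : (_ : ℝ) = _ := congrArg Nat.cast
    (count_add_count_compl S (2 * C + 2 * hfin.toFinset.card + 1))
  have := hC (2 * C + 2 * hfin.toFinset.card + 1)
  have : (_ : ℝ) ≤ _ := Nat.cast_le.2 hcompl
  push_cast at *
  linarith

lemma exists_frequently_le_count_of_not_hasDensityZero (hS : ¬ HasDensityZero S) :
    ∃ η > (0 : ℝ), ∃ᶠ n : ℕ in atTop, η * n ≤ Nat.count (· ∈ S) n := by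
  simp only [HasDensityZero, isLittleO_iff, not_forall, not_eventually, Real.norm_natCast,
    not_le] at hS
  obtain ⟨η, hη, h⟩ := hS
  exact ⟨η, hη, h.mono fun n hn ↦ hn.le⟩

lemma count_le_count_add_of_inter_Ici_subset {N : ℕ} (hST : S ∩ Set.Ici N ⊆ T) (n : ℕ) :
    Nat.count (· ∈ S) n ≤ Nat.count (· ∈ T) n + N := by
  induction n with
  | zero => simp
  | succ n ih =>
    have hmem (hn : n ∈ S) (hNn : N ≤ n) : n ∈ T := hST ⟨hn, hNn⟩
    have := Nat.count_le (p := (· ∈ S)) (n := n)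
    simp only [Nat.count_succ]
    split_ifs <;> grind

/-- Multiplying `m + 1` consecutive values of `u` turns the lagged decay hypothesis into a decay
of each single step. -/
lemma pow_le_pow_count {u : ℕ → ℝ} (hu : Antitone u) (hnonneg : ∀ n, 0 ≤ u n) (hone : u 0 ≤ 1)
    {ρ : ℝ} (hρ : 0 ≤ ρ) {m : ℕ} (hT : ∀ n ∈ T, u (n + (m + 1)) ≤ ρ * u n) (n : ℕ) :
    u (n + m) ^ (m + 1) ≤ ρ ^ Nat.count (· ∈ T) n := by
  have hprod : ∏ i ∈ Finset.range (m + 1), u (n + i) ≤ ρ ^ Nat.count (· ∈ T) n := by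
    induction n with
    | zero =>
      simpa using Finset.prod_le_one (fun i _ ↦ hnonneg _)
        fun i _ ↦ (hu (Nat.zero_le i)).trans hone
    | succ n ih =>
      have hsplit : ∏ i ∈ Finset.range (m + 1), u (n + i) =
          (∏ i ∈ Finset.range m, u (n + 1 + i)) * u n := by
        rw [Finset.prod_range_succ']
        simp only [add_zero, add_right_comm n 1, add_assoc]
      have hmid : 0 ≤ ∏ i ∈ Finset.range m, u (n + 1 + i) :=
        Finset.prod_nonneg fun i _ ↦ hnonneg _
      rw [Finset.prod_range_succ, Nat.count_succ, show n + 1 + m = n + (m + 1) by ring]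
      rw [hsplit] at ih
      split_ifs with hn
      · rw [pow_succ']
        nlinarith [mul_le_mul_of_nonneg_left (hT n hn) hmid]
      · exact (mul_le_mul_of_nonneg_left (hu (Nat.le_add_right _ _)) hmid).trans ih
  refine le_trans ?_ hprod
  rw [← Finset.card_range (m + 1), ← Finset.prod_const, Finset.card_range]
  exact Finset.prod_le_prod (fun i _ ↦ hnonneg _) fun i hi ↦
    hu (by simp only [Finset.mem_range] at hi; lia)

lemma card_filter_Icc_add_count {p : ℕ → Prop} (hp : ∀ n, p (n + 1) ↔ n ∉ S) (N : ℕ) :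
    ((Finset.Icc 1 N).filter p).card + Nat.count (· ∈ S) N = N := by
  have hIcc : Finset.Icc 1 N = (Finset.range N).map (addRightEmbedding 1) := by
    rw [Finset.range_eq_Ico, Finset.map_add_right_Ico]
    rfl
  rw [hIcc, Finset.filter_map, Finset.card_map, Nat.count_eq_card_filter_range, add_comm]
  simp only [Function.comp_def, addRightEmbedding_apply, hp]
  rw [Finset.card_filter_add_card_filter_not, Finset.card_range]

lemma tendsto_card_filter_Icc_div_iff {p : ℕ → Prop} (hp : ∀ n, p (n + 1) ↔ n ∉ S) :
    Tendsto (fun N : ℕ ↦ (((Finset.Icc 1 N).filter p).card : ℝ) / N) atTop (nhds 1) ↔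
      HasDensityZero S := by
  rw [HasDensityZero, isLittleO_iff_tendsto (by simp +contextual)]
  have hcompl : (fun N : ℕ ↦ (((Finset.Icc 1 N).filter p).card : ℝ) / N) =ᶠ[atTop]
      fun N : ℕ ↦ 1 - (Nat.count (· ∈ S) N : ℝ) / N := by
    filter_upwards [eventually_ne_atTop 0] with N hN
    rw [eq_sub_iff_add_eq, ← add_div, div_eq_one_iff_eq (Nat.cast_ne_zero.2 hN)]
    exact_mod_cast card_filter_Icc_add_count hp N
  rw [tendsto_congr' hcompl]
  exact ⟨fun h ↦ by simpa using h.const_sub 1, fun h ↦ by simpa using h.const_sub 1⟩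

end Density

variable {K : Type*} [Field K]

section Digits

/-- `digit i x` is the coefficient of `z^{-(i + 1)}` in `x`, so that digits are indexed from `0`
and `{x} = ∑ i ≥ 0, digit i x * z^{-(i + 1)}`. -/
def digit (i : ℕ) : FF K →+ K where
  toFun x := (toL x).coeff (i + 1)
  map_zero' := rfl
  map_add' _ _ := rfl

/-- The vector of the first `n` digits of the fractional part. -/
def firstDigits (n : ℕ) : FF K →+ (Fin n → K) where
  toFun x i := digit i x
  map_zero' := rfl
  map_add' _ _ := rfl

/-- The series `∑ i ≥ 0, a i * z^{-(i + 1)}`. -/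
def ofDigits (a : ℕ → K) : FF K :=
  (HahnSeries.ofSuppBddBelow (fun i : ℤ ↦ if 1 ≤ i then a (i - 1).toNat else 0)
    ⟨1, fun i hi ↦ by by_contra hlt; simp [hlt] at hi⟩ : LaurentSeries K)

lemma coeff_ofDigits (a : ℕ → K) (i : ℤ) :
    (toL (ofDigits a)).coeff i = if 1 ≤ i then a (i - 1).toNat else 0 := rfl

lemma digit_ofDigits (a : ℕ → K) (i : ℕ) : digit i (ofDigits a) = a i := by
  change (toL (ofDigits a)).coeff (i + 1) = a i
  simp [coeff_ofDigits]

lemma firstDigits_eq_iff {n : ℕ} {x y : FF K} :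
    firstDigits n x = firstDigits n y ↔ ∀ i < n, digit i x = digit i y :=
  funext_iff.trans Fin.forall_iff

lemma firstDigits_eq_zero_iff {n : ℕ} {x : FF K} :
    firstDigits n x = 0 ↔ ∀ i < n, digit i x = 0 :=
  funext_iff.trans Fin.forall_iff

lemma firstDigits_eq_zero_of_le {m n : ℕ} (hmn : m ≤ n) {x : FF K} (h : firstDigits n x = 0) :
    firstDigits m x = 0 :=
  firstDigits_eq_zero_iff.2 fun i hi ↦ firstDigits_eq_zero_iff.1 h i (hi.trans_le hmn)

lemma digit_fracPart (i : ℕ) (x : FF K) : digit i (fracPart x) = digit i x :=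
  if_pos (by lia : (1 : ℤ) ≤ i + 1)

lemma firstDigits_fracPart (n : ℕ) (x : FF K) : firstDigits n (fracPart x) = firstDigits n x :=
  funext fun i ↦ digit_fracPart i x

lemma polyF_zero : polyF (0 : Polynomial K) = 0 :=
  map_zero (Polynomial.aeval (HahnSeries.single (-1 : ℤ) (1 : K)))

lemma polyF_add (P Q : Polynomial K) : polyF (P + Q) = polyF P + polyF Q :=
  map_add (Polynomial.aeval (HahnSeries.single (-1 : ℤ) (1 : K))) P Q

lemma polyF_sub (P Q : Polynomial K) : polyF (P - Q) = polyF P - polyF Q :=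
  map_sub (Polynomial.aeval (HahnSeries.single (-1 : ℤ) (1 : K))) P Q

lemma polyF_mul (P Q : Polynomial K) : polyF (P * Q) = polyF P * polyF Q :=
  map_mul (Polynomial.aeval (HahnSeries.single (-1 : ℤ) (1 : K))) P Q

lemma polyF_eq_sum (P : Polynomial K) : toL (polyF P) =
    ∑ j ∈ Finset.range (P.natDegree + 1), HahnSeries.single (-(j : ℤ)) (P.coeff j) := by
  change Polynomial.aeval (HahnSeries.single (-1 : ℤ) (1 : K)) P = _
  rw [Polynomial.aeval_eq_sum_range]
  refine Finset.sum_congr rfl fun j _ ↦ ?_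
  rw [HahnSeries.single_pow, one_pow, Algebra.smul_def]
  simp [HahnSeries.C_apply, LaurentSeries.algebraMap_apply]

lemma coeff_polyF (P : Polynomial K) (i : ℤ) :
    (toL (polyF P)).coeff i = if i ≤ 0 then P.coeff (-i).toNat else 0 := by
  rw [polyF_eq_sum, HahnSeries.coeff_sum]
  simp only [HahnSeries.coeff_single]
  split_ifs with hi
  · obtain ⟨k, rfl⟩ := Int.exists_eq_neg_ofNat hi
    simp only [neg_neg, Int.toNat_natCast, neg_inj, Nat.cast_inj, Finset.sum_ite_eq,
      Finset.mem_range, Order.lt_add_one_iff, ite_eq_left_iff, not_le]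
    exact fun hk ↦ (Polynomial.coeff_eq_zero_of_natDegree_lt hk).symm
  · exact Finset.sum_eq_zero fun j _ ↦ if_neg (by lia)

lemma coeff_polyF_mul (P : Polynomial K) (f : FF K) (i : ℤ) :
    (toL (polyF P * f)).coeff i =
      ∑ j ∈ Finset.range (P.natDegree + 1), P.coeff j * (toL f).coeff (i + j) := by
  have hmul : toL (polyF P * f) = toL (polyF P) * toL f := rfl
  rw [hmul, polyF_eq_sum, Finset.sum_mul, HahnSeries.coeff_sum]
  refine Finset.sum_congr rfl fun j _ ↦ ?_
  rw [← HahnSeries.coeff_single_mul_add (b := -(j : ℤ)), add_neg_cancel_right]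

lemma digit_polyF (i : ℕ) (P : Polynomial K) : digit i (polyF P) = 0 :=
  (coeff_polyF P (i + 1)).trans (if_neg (by lia))

lemma digit_polyF_mul (i : ℕ) (P : Polynomial K) (f : FF K) :
    digit i (polyF P * f) =
      ∑ j ∈ Finset.range (P.natDegree + 1), P.coeff j * digit (i + j) f := by
  refine (coeff_polyF_mul P f (i + 1)).trans (Finset.sum_congr rfl fun j _ ↦ ?_)
  change _ = P.coeff j * (toL f).coeff ((i + j : ℕ) + 1)
  rw [Nat.cast_add, add_right_comm]

lemma digit_polyF_mul_of_firstDigits_eq_zero {i : ℕ} {P : Polynomial K} {f : FF K}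
    (hf : firstDigits (i + P.natDegree) f = 0) :
    digit i (polyF P * f) = P.leadingCoeff * digit (i + P.natDegree) f := by
  rw [digit_polyF_mul, Finset.sum_range_succ, Polynomial.coeff_natDegree, add_eq_right]
  refine Finset.sum_eq_zero fun j hj ↦ ?_
  rw [firstDigits_eq_zero_iff.1 hf _ (by simpa using hj), mul_zero]

lemma firstDigits_polyF_mul_eq_zero {k : ℕ} {P : Polynomial K} {f : FF K}
    (hf : firstDigits (k + P.natDegree) f = 0) : firstDigits k (polyF P * f) = 0 := by
  refine firstDigits_eq_zero_iff.2 fun i hi ↦ ?_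
  rw [digit_polyF_mul_of_firstDigits_eq_zero (firstDigits_eq_zero_of_le (by lia) hf),
    firstDigits_eq_zero_iff.1 hf _ (by lia), mul_zero]

lemma fracPart_eq_sub_polyF (x : FF K) : fracPart x = x - polyF (intPoly x) := by
  refine HahnSeries.ext (funext fun i ↦ ?_)
  change (if 1 ≤ i then (toL x).coeff i else 0) =
    (toL x).coeff i - (toL (polyF (intPoly x))).coeff i
  rw [coeff_polyF]
  split_ifs with hpos hnonpos hnonpos
  · lia
  · rw [sub_zero]
  · obtain ⟨k, rfl⟩ := Int.exists_eq_neg_ofNat hnonpos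
    simp only [intPoly, Polynomial.finsetSum_coeff, Polynomial.coeff_monomial, neg_neg,
      Int.toNat_natCast, Finset.sum_ite_eq', Finset.mem_range]
    split_ifs with hk
    · rw [sub_self]
    · rw [HahnSeries.coeff_eq_zero_of_lt_order (by lia), sub_zero]
  · lia

/-- The block of `m` digits starting at position `d`. -/
def digitBlock (d m : ℕ) (x : FF K) : Fin m → K :=
  fun i ↦ digit (d + i) x

lemma append_firstDigits_digitBlock (d m : ℕ) (x : FF K) :
    Fin.append (firstDigits d x) (digitBlock d m x) = firstDigits (d + m) x :=
  Fin.append_castAdd_natAdd (f := firstDigits (d + m) x)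

end Digits

section Convergents

lemma digit_polyF_smul_mul (i : ℕ) (c : K) (P : Polynomial K) (f : FF K) :
    digit i (polyF (c • P) * f) = c * digit i (polyF P * f) := by
  rw [← Polynomial.C_mul', polyF_mul, mul_assoc, digit_polyF_mul]
  simp

/-- The `n × m` Hankel matrix of the digits of `α`, as the linear map taking a polynomial `P` of
degree less than `m` to the first `n` digits of `P α`. -/
def hankelMap (α : FF K) (m n : ℕ) : Polynomial.degreeLT K m →ₗ[K] (Fin n → K) where
  toFun P := firstDigits n (polyF (P : Polynomial K) * α)
  map_add' P Q := by rw [Submodule.coe_add, polyF_add, add_mul, map_add]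
  map_smul' c P := funext fun i ↦ digit_polyF_smul_mul i c P α

/-- The set of degrees of denominators of convergents of `α`, encoded as the set of sizes `d` for
which the `d × d` Hankel matrix of the digits of `α` is nonsingular. -/
def convergentDegrees (α : FF K) : Set ℕ :=
  {d | Function.Injective (hankelMap α d d)}

/-- `Q` is the monic denominator of a convergent of `α`. -/
structure IsConvergentDenominator (α : FF K) (Q : Polynomial K) : Prop where
  monic : Q.Monic
  natDegree_mem : Q.natDegree ∈ convergentDegrees α
  firstDigits_eq_zero : firstDigits Q.natDegree (polyF Q * α) = 0

variable {α : FF K} {d : ℕ}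

lemma mem_convergentDegrees_iff : d ∈ convergentDegrees α ↔
    ∀ P : Polynomial K, P.degree < d → firstDigits d (polyF P * α) = 0 → P = 0 :=
  (injective_iff_map_eq_zero (hankelMap α d d)).trans
    ⟨fun h P hP hPα ↦ congrArg Subtype.val (h ⟨P, Polynomial.mem_degreeLT.2 hP⟩ hPα),
      fun h P hPα ↦ Subtype.ext (h P (Polynomial.mem_degreeLT.1 P.2) hPα)⟩

lemma exists_monic_firstDigits_eq (hd : d ∈ convergentDegrees α) (w : Fin d → K) :
    ∃ P : Polynomial K, P.Monic ∧ P.natDegree = d ∧ firstDigits d (polyF P * α) = w := by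
  have : Module.Finite K (Polynomial.degreeLT K d) :=
    Module.Finite.equiv (Polynomial.degreeLTEquiv K d).symm
  have hsurj : Function.Surjective (hankelMap α d d) :=
    (LinearMap.injective_iff_surjective_of_finrank_eq_finrank
      (Polynomial.degreeLTEquiv K d).finrank_eq).1 hd
  obtain ⟨⟨R, hR⟩, hRw⟩ := hsurj (w - firstDigits d (polyF (Polynomial.X ^ d) * α))
  rw [Polynomial.mem_degreeLT] at hR
  refine ⟨Polynomial.X ^ d + R, Polynomial.monic_X_pow_add hR, ?_, ?_⟩
  · rw [Polynomial.natDegree_add_eq_left_of_degree_lt (by simpa using hR),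
      Polynomial.natDegree_X_pow]
  · rw [polyF_add, add_mul, map_add]
    exact eq_sub_iff_add_eq'.1 hRw

lemma IsConvergentDenominator.eq_of_natDegree_eq {P Q : Polynomial K}
    (hP : IsConvergentDenominator α P) (hQ : IsConvergentDenominator α Q)
    (hPQ : P.natDegree = Q.natDegree) : P = Q := by
  refine sub_eq_zero.1 (mem_convergentDegrees_iff.1 hP.natDegree_mem _ ?_ ?_)
  · rw [← Polynomial.degree_eq_natDegree hP.monic.ne_zero]
    refine Polynomial.degree_sub_lt_left ?_ hP.monic.ne_zero (hP.monic.trans hQ.monic.symm)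
    rw [Polynomial.degree_eq_natDegree hP.monic.ne_zero,
      Polynomial.degree_eq_natDegree hQ.monic.ne_zero, hPQ]
  · rw [polyF_sub, sub_mul, map_sub, hP.firstDigits_eq_zero, hPQ, hQ.firstDigits_eq_zero, sub_zero]

lemma exists_ne_zero_firstDigits_eq_zero (α : FF K) (n : ℕ) :
    ∃ P : Polynomial K, P ≠ 0 ∧ P.natDegree ≤ n ∧ firstDigits n (polyF P * α) = 0 := by
  have : Module.Finite K (Polynomial.degreeLT K (n + 1)) :=
    Module.Finite.equiv (Polynomial.degreeLTEquiv K (n + 1)).symm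
  have hker : (hankelMap α (n + 1) n).ker ≠ ⊥ := by
    refine LinearMap.ker_ne_bot_of_finrank_lt ?_
    rw [(Polynomial.degreeLTEquiv K (n + 1)).finrank_eq]
    simp
  obtain ⟨⟨P, hP⟩, hPα, hP0⟩ := Submodule.exists_mem_ne_zero_of_ne_bot hker
  refine ⟨P, fun h ↦ hP0 (Subtype.ext h), ?_, hPα⟩
  exact Nat.lt_succ_iff.1 ((Polynomial.natDegree_lt_iff_degree_lt fun h ↦ hP0 (Subtype.ext h)).2
    (Polynomial.mem_degreeLT.1 hP))

/-- If `x` had degree less than `d = deg Q` and `d` vanishing digits in `x α`, the first nonzero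
digit of `x α` would survive multiplication by `Q`, while `x (Q α)` has a zero there. -/
lemma natDegree_mem_convergentDegrees_of_minimal {n : ℕ} {Q : Polynomial K} (hQ : Q ≠ 0)
    (hQα : firstDigits n (polyF Q * α) = 0)
    (hmin : ∀ P ≠ 0, firstDigits n (polyF P * α) = 0 → Q.natDegree ≤ P.natDegree) :
    Q.natDegree ∈ convergentDegrees α := by
  refine mem_convergentDegrees_iff.2 fun x hx hxα ↦ ?_
  by_contra hx0
  have hdeg : x.natDegree < Q.natDegree := (Polynomial.natDegree_lt_iff_degree_lt hx0).2 hx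
  have hexists : ∃ k, ¬ (k < n → digit k (polyF x * α) = 0) := by
    by_contra! h
    exact (hmin x hx0 (firstDigits_eq_zero_iff.2 h)).not_gt hdeg
  obtain ⟨k, hk, hfirst⟩ := Nat.findX hexists
  push Not at hk hfirst
  have hdk : Q.natDegree ≤ k := by
    by_contra! hlt
    exact hk.2 (firstDigits_eq_zero_iff.1 hxα k hlt)
  obtain ⟨i, rfl⟩ := Nat.exists_eq_add_of_le' hdk
  have hQx : digit i (polyF Q * (polyF x * α)) ≠ 0 := by
    rw [digit_polyF_mul_of_firstDigits_eq_zero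
      (firstDigits_eq_zero_iff.2 fun j hj ↦ hfirst j hj (hj.trans hk.1))]
    exact mul_ne_zero (Polynomial.leadingCoeff_ne_zero.2 hQ) hk.2
  have hxQ : firstDigits (i + 1) (polyF x * (polyF Q * α)) = 0 :=
    firstDigits_polyF_mul_eq_zero (firstDigits_eq_zero_of_le (by lia) hQα)
  rw [mul_left_comm] at hQx
  exact hQx (firstDigits_eq_zero_iff.1 hxQ i i.lt_succ_self)

lemma exists_isConvergentDenominator (α : FF K) (n : ℕ) :
    ∃ Q, IsConvergentDenominator α Q ∧ Q.natDegree ≤ n ∧ firstDigits n (polyF Q * α) = 0 := by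
  obtain ⟨P, hP0, hPn, hPα⟩ := exists_ne_zero_firstDigits_eq_zero α n
  obtain ⟨Q, ⟨hQ0, hQα⟩, hmin⟩ := exists_minimalFor_of_wellFoundedLT
    (fun Q : Polynomial K ↦ Q ≠ 0 ∧ firstDigits n (polyF Q * α) = 0) Polynomial.natDegree
    ⟨P, hP0, hPα⟩
  have hmin' (R : Polynomial K) (hR0 : R ≠ 0) (hRα : firstDigits n (polyF R * α) = 0) :
      Q.natDegree ≤ R.natDegree := (le_total _ _).elim id (hmin ⟨hR0, hRα⟩)
  have hlead : Q.leadingCoeff⁻¹ ≠ 0 := inv_ne_zero (Polynomial.leadingCoeff_ne_zero.2 hQ0)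
  have hQn : Q.natDegree ≤ n := (hmin' P hP0 hPα).trans hPn
  have hQα' : firstDigits n (polyF (Q.leadingCoeff⁻¹ • Q) * α) = 0 :=
    firstDigits_eq_zero_iff.2 fun i hi ↦ by
      rw [digit_polyF_smul_mul, firstDigits_eq_zero_iff.1 hQα i hi, mul_zero]
  have hdeg : (Q.leadingCoeff⁻¹ • Q).natDegree = Q.natDegree :=
    Polynomial.natDegree_smul Q hlead
  refine ⟨Q.leadingCoeff⁻¹ • Q, ⟨?_, ?_, ?_⟩, hdeg.trans_le hQn, hQα'⟩
  · rw [Polynomial.Monic, Polynomial.leadingCoeff, hdeg, Polynomial.coeff_smul, smul_eq_mul,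
      Polynomial.coeff_natDegree, inv_mul_cancel₀ (Polynomial.leadingCoeff_ne_zero.2 hQ0)]
  · rw [hdeg]
    exact natDegree_mem_convergentDegrees_of_minimal hQ0 hQα hmin'
  · exact firstDigits_eq_zero_of_le (hdeg.trans_le hQn) hQα'

end Convergents

variable [Fintype K]

local notation "q" => Fintype.card K

section Norm

lemma one_lt_q : (1 : ℝ) < q := by
  exact_mod_cast (Fintype.one_lt_card : 1 < q)

lemma fnorm_lt_zpow_iff (x : FF K) (n : ℤ) :
    fnorm x < (q : ℝ) ^ (-n) ↔ ∀ i ≤ n, (toL x).coeff i = 0 := by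
  have hq := one_lt_q (K := K)
  unfold fnorm
  split_ifs with hx
  · exact iff_of_true (by positivity) fun i _ ↦ by rw [hx]; rfl
  · rw [zpow_lt_zpow_iff_right₀ hq, neg_lt_neg_iff]
    refine ⟨fun hn i hi ↦ HahnSeries.coeff_eq_zero_of_lt_order (hi.trans_lt hn), fun h ↦ ?_⟩
    by_contra! hn
    exact hx (HahnSeries.coeff_order_eq_zero.1 (h _ hn))

lemma fnorm_lt_one_iff {x : FF K} : fnorm x < 1 ↔ ∀ i ≤ 0, (toL x).coeff i = 0 := by
  simpa using fnorm_lt_zpow_iff x 0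

lemma fnorm_ofDigits_lt_one (a : ℕ → K) : fnorm (ofDigits a) < 1 :=
  fnorm_lt_one_iff.2 fun i hi ↦ by rw [coeff_ofDigits, if_neg (by lia)]

lemma fnorm_fracPart_lt_one (x : FF K) : fnorm (fracPart x) < 1 :=
  fnorm_lt_one_iff.2 fun i hi ↦ if_neg (by lia : ¬ 1 ≤ i)

lemma firstDigits_eq_zero_of_fnorm_lt {x : FF K} {n : ℕ} (h : fnorm x < ((q : ℝ) ^ n)⁻¹) :
    firstDigits n x = 0 := by
  rw [← zpow_natCast, ← zpow_neg, fnorm_lt_zpow_iff] at h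
  exact firstDigits_eq_zero_iff.2 fun i hi ↦ h _ (by lia)

lemma fnorm_lt_inv_pow_iff {x : FF K} (hx : fnorm x < 1) {n : ℕ} :
    fnorm x < ((q : ℝ) ^ n)⁻¹ ↔ firstDigits n x = 0 := by
  refine ⟨firstDigits_eq_zero_of_fnorm_lt, fun h ↦ ?_⟩
  rw [← zpow_natCast, ← zpow_neg, fnorm_lt_zpow_iff]
  intro i hi
  obtain hi0 | hi0 := le_or_gt i 0
  · exact fnorm_lt_one_iff.1 hx i hi0
  · obtain ⟨j, rfl⟩ : ∃ j : ℕ, i = j + 1 := ⟨(i - 1).toNat, by lia⟩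
    exact firstDigits_eq_zero_iff.1 h j (by lia)

lemma fnorm_fracPart_lt_iff {x : FF K} {n : ℕ} :
    fnorm (fracPart x) < ((q : ℝ) ^ n)⁻¹ ↔ firstDigits n x = 0 := by
  rw [fnorm_lt_inv_pow_iff (fnorm_fracPart_lt_one x), firstDigits_fracPart]

lemma sdist_lt_iff {x : FF K} {n : ℕ} : sdist x < ((q : ℝ) ^ n)⁻¹ ↔ firstDigits n x = 0 := by
  constructor
  · intro h
    obtain ⟨y, hy⟩ := exists_lt_of_ciInf_lt h
    rw [← firstDigits_eq_zero_of_fnorm_lt hy, map_sub, eq_comm, sub_eq_self]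
    exact funext fun i ↦ digit_polyF i y
  · intro h
    refine lt_of_le_of_lt (ciInf_le ⟨0, ?_⟩ (intPoly x)) (fnorm_fracPart_lt_iff.2 h |>.trans_eq' ?_)
    · rintro _ ⟨y, rfl⟩
      exact fnorm_nonneg _
    · rw [fracPart_eq_sub_polyF]

lemma dist_lt_iff_firstDigits_eq {x y : FF K} (hx : fnorm x < 1) (hy : fnorm y < 1) {n : ℕ} :
    dist x y < ((q : ℝ) ^ n)⁻¹ ↔ firstDigits n x = firstDigits n y := by
  have hxy : fnorm (x - y) < 1 := by
    rw [sub_eq_add_neg]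
    exact (fnorm_add_le x (-y)).trans_lt (max_lt hx (by rwa [fnorm_neg]))
  rw [← sub_eq_zero, ← map_sub]
  exact fnorm_lt_inv_pow_iff hxy

lemma exists_fnorm_eq_inv_pow {x : FF K} (hx : fnorm x < 1) (hx0 : x ≠ 0) :
    ∃ n : ℕ, fnorm x = ((q : ℝ) ^ (n + 1))⁻¹ := by
  have horder : 0 < (toL x).order := by
    by_contra! h
    exact hx0 (HahnSeries.coeff_order_eq_zero.1 (fnorm_lt_one_iff.1 hx _ h))
  refine ⟨((toL x).order - 1).toNat, ?_⟩
  rw [fnorm, if_neg (show toL x ≠ 0 from hx0), ← zpow_natCast, ← zpow_neg]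
  congr 1
  lia

lemma fnorm_polyF {P : Polynomial K} (hP : P ≠ 0) :
    fnorm (polyF P) = (q : ℝ) ^ P.natDegree := by
  have hlead : (toL (polyF P)).coeff (-(P.natDegree : ℤ)) ≠ 0 := by
    rw [coeff_polyF, if_pos (by lia)]
    simpa using hP
  have hne : toL (polyF P) ≠ 0 := fun h ↦ hlead (by rw [h]; rfl)
  have horder : (toL (polyF P)).order = -(P.natDegree : ℤ) := by
    refine (HahnSeries.order_le_of_coeff_ne_zero hlead).antisymm ?_
    by_contra! hlt
    refine hne (HahnSeries.coeff_order_eq_zero.1 ?_)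
    rw [coeff_polyF, if_pos (by lia), Polynomial.coeff_eq_zero_of_natDegree_lt (by lia)]
  rw [fnorm, if_neg hne, horder, neg_neg, zpow_natCast]

end Norm

section SingularOnAverage

/-- The scale `2 ^ l` at which Dirichlet's theorem for `α` improves to the constant `c`. -/
def IsSingularScale (α : FF K) (c : ℝ) (l : ℕ) : Prop :=
  ∃ Q : Polynomial K, Q ≠ 0 ∧ fnorm (polyF Q) ≤ 2 ^ l ∧
    fnorm (fracPart (polyF Q * α)) ≤ c / 2 ^ l

variable {α : FF K}

lemma singularOnAverage_iff :
    SingularOnAverage α ↔ ∀ c > 0, HasDensityZero {l | ¬ IsSingularScale α c l} :=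
  forall₂_congr fun _ _ ↦
    (tendsto_card_filter_Icc_div_iff (by simp [IsSingularScale])).trans hasDensityZero_preimage_succ

lemma not_isSingularScale {c : ℝ} {d l : ℕ} (hd : d ∈ convergentDegrees α)
    (hld : 2 ^ l < q ^ d) (hc : c * q ^ d < 2 ^ l) : ¬ IsSingularScale α c l := by
  rintro ⟨Q, hQ0, hQ, hQα⟩
  have hq := one_lt_q (K := K)
  have hdeg : Q.natDegree < d := by
    rw [fnorm_polyF hQ0] at hQ
    exact (pow_lt_pow_iff_right₀ hq).1 (hQ.trans_lt (by exact_mod_cast hld))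
  refine hQ0 (mem_convergentDegrees_iff.1 hd Q
    ((Polynomial.natDegree_lt_iff_degree_lt hQ0).1 hdeg) ?_)
  refine fnorm_fracPart_lt_iff.1 (hQα.trans_lt ?_)
  rwa [div_lt_iff₀ (by positivity), inv_mul_eq_div, lt_div_iff₀ (by positivity)]

lemma exists_mem_convergentDegrees_of_not_isSingularScale {c : ℝ} {M l : ℕ}
    (hM : q ≤ c * q ^ M) (hl : ¬ IsSingularScale α c l) :
    ∃ d ∈ convergentDegrees α, 2 ^ l < q ^ d ∧ q ^ d ≤ q ^ M * 2 ^ l := by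
  set n := Nat.log q (2 ^ l)
  have hnl : q ^ n ≤ 2 ^ l := Nat.pow_log_le_self q (by positivity)
  have hln : 2 ^ l < q ^ (n + 1) := Nat.lt_pow_succ_log_self Fintype.one_lt_card _
  obtain ⟨Q, hQ, hQn, hQα⟩ := exists_isConvergentDenominator α (n + M)
  refine ⟨Q.natDegree, hQ.natDegree_mem, ?_, ?_⟩
  · by_contra! hdeg
    refine hl ⟨Q, hQ.monic.ne_zero, ?_, (fnorm_fracPart_lt_iff.2 hQα).le.trans ?_⟩
    · rw [fnorm_polyF hQ.monic.ne_zero]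
      exact_mod_cast hdeg
    · rw [inv_eq_one_div, div_le_div_iff₀ (by positivity) (by positivity), one_mul]
      calc (2 : ℝ) ^ l ≤ q ^ (n + 1) := by exact_mod_cast hln.le
        _ = q ^ n * q := pow_succ _ _
        _ ≤ q ^ n * (c * q ^ M) := by gcongr
        _ = c * q ^ (n + M) := by ring
  · calc q ^ Q.natDegree ≤ q ^ (n + M) := Nat.pow_le_pow_right Fintype.card_pos hQn
      _ = q ^ M * q ^ n := by ring
      _ ≤ q ^ M * 2 ^ l := Nat.mul_le_mul_left _ hnl

lemma SingularOnAverage.hasDensityZero_convergentDegrees (h : SingularOnAverage α) :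
    HasDensityZero (convergentDegrees α) := by
  have hq : 2 ≤ q := Fintype.one_lt_card
  have hscale (d : ℕ) : ∃ l, 2 ^ l < q ^ (d + 1) ∧ q ^ (d + 1) ≤ 2 ^ (l + 1) := by
    have hqd : 1 < q ^ (d + 1) := Nat.one_lt_pow d.succ_ne_zero hq
    refine ⟨Nat.clog 2 (q ^ (d + 1)) - 1, Nat.pow_pred_clog_lt_self one_lt_two hqd, ?_⟩
    rw [Nat.sub_add_cancel (Nat.clog_pos one_lt_two hqd)]
    exact Nat.le_pow_clog one_lt_two _
  choose φ hφlt hφle using hscale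
  refine hasDensityZero_preimage_succ.1 ((singularOnAverage_iff.1 h (1 / 4) (by norm_num)).of_mapsTo
    (φ := φ) (C := q) (k := 1) ?_ ?_ ?_)
  · intro d hd
    refine not_isSingularScale hd (hφlt d) ?_
    have : (q : ℝ) ^ (d + 1) ≤ 2 ^ (φ d + 1) := by exact_mod_cast hφle d
    rw [pow_succ 2] at this
    linarith [pow_pos (zero_lt_two (α := ℝ)) (φ d)]
  · intro d _
    refine ((Nat.pow_lt_pow_iff_right one_lt_two).1 ((hφlt d).trans_le ?_)).le
    rw [pow_mul]
    exact Nat.pow_le_pow_left Nat.lt_two_pow_self.le _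
  · intro d _ d' _ heq
    by_contra! hlt
    have := calc q ^ (d + 1) * 2 ≤ q ^ (d + 1) * q := Nat.mul_le_mul_left _ hq
      _ ≤ q ^ (d' + 1) := by rw [← pow_succ]; exact Nat.pow_le_pow_right (by lia) (by lia)
      _ ≤ 2 ^ (φ d + 1) := heq ▸ hφle d'
    rw [pow_succ 2] at this
    linarith [hφlt d]

lemma singularOnAverage_of_hasDensityZero (h : HasDensityZero (convergentDegrees α)) :
    SingularOnAverage α := by
  refine singularOnAverage_iff.2 fun c hc ↦ ?_
  have hq : 2 ≤ q := Fintype.one_lt_card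
  obtain ⟨M, hM⟩ := pow_unbounded_of_one_lt (q / c : ℝ) (one_lt_q (K := K))
  rw [div_lt_iff₀' hc] at hM
  have hscale (l : ℕ) (hl : l ∈ {l | ¬ IsSingularScale α c l}) :=
    exists_mem_convergentDegrees_of_not_isSingularScale hM.le hl
  choose! φ hφmem hφlt hφle using hscale
  refine h.of_mapsTo (φ := φ) (C := M + 1) (k := q * M) hφmem ?_ ?_
  · intro l hl
    have : φ l ≤ M + l := by
      refine (Nat.pow_le_pow_iff_right hq).1 ((hφle l hl).trans ?_)
      rw [pow_add]
      exact Nat.mul_le_mul_left _ (Nat.pow_le_pow_left hq l)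
    nlinarith
  · intro l hl l' hl' heq
    refine (Nat.pow_lt_pow_iff_right one_lt_two).1 ((heq ▸ hφlt l' hl').trans_le ?_)
    calc q ^ φ l ≤ q ^ M * 2 ^ l := hφle l hl
      _ ≤ (2 ^ q) ^ M * 2 ^ l :=
        Nat.mul_le_mul_right _ (Nat.pow_le_pow_left Nat.lt_two_pow_self.le M)
      _ = 2 ^ (l + q * M) := by rw [← pow_mul, ← pow_add, add_comm]

theorem singularOnAverage_iff_hasDensityZero :
    SingularOnAverage α ↔ HasDensityZero (convergentDegrees α) :=
  ⟨SingularOnAverage.hasDensityZero_convergentDegrees, singularOnAverage_of_hasDensityZero⟩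

end SingularOnAverage

section AvoidingSet

variable {α : FF K}

/-- The set of `θ ∈ 𝕀` for which `Q θ` stays at distance `q⁻¹` from the polynomials, for every
convergent denominator `Q` of `α`. -/
def avoidingSet (α : FF K) : Set (FF K) :=
  {θ | fnorm θ < 1 ∧ ∀ Q, IsConvergentDenominator α Q → digit 0 (polyF Q * θ) ≠ 0}

lemma exists_seq_eq_recursion {A : Type*} (F : (n : ℕ) → (Fin n → A) → A) :
    ∃ a : ℕ → A, ∀ n, a n = F n fun i ↦ a i :=
  ⟨fun n ↦ Nat.strongRec (fun n ih ↦ F n fun i ↦ ih i i.2) n, fun n ↦ Nat.strongRec_eq _ n⟩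

lemma exists_mem_avoidingSet (α : FF K) (b : ℕ → K) :
    ∃ θ ∈ avoidingSet α, ∀ n ∉ convergentDegrees α, digit n θ = b n := by
  obtain ⟨a, ha⟩ := exists_seq_eq_recursion fun n (v : Fin n → K) ↦
    if h : ∃ Q, IsConvergentDenominator α Q ∧ Q.natDegree = n
    then 1 - ∑ j : Fin n, h.choose.coeff j * v j else b n
  refine ⟨ofDigits a, ⟨fnorm_ofDigits_lt_one a, fun Q hQ ↦ ?_⟩, fun n hn ↦ ?_⟩
  · have h : ∃ P, IsConvergentDenominator α P ∧ P.natDegree = Q.natDegree := ⟨Q, hQ, rfl⟩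
    have hchoose : h.choose = Q := h.choose_spec.1.eq_of_natDegree_eq hQ h.choose_spec.2
    have hforced := ha Q.natDegree
    rw [dif_pos h, hchoose] at hforced
    rw [digit_polyF_mul, Finset.sum_range_succ, Polynomial.coeff_natDegree, hQ.monic, one_mul,
      Finset.sum_range]
    simp only [zero_add, digit_ofDigits]
    rw [hforced, add_sub_cancel]
    exact one_ne_zero
  · rw [digit_ofDigits, ha, dif_neg]
    rintro ⟨Q, hQ, rfl⟩
    exact hn hQ.natDegree_mem

lemma le_sBadLiminf {θ : FF K} {ε : ℝ}
    (h : ∀ x : Polynomial K, x ≠ 0 → ε ≤ fnorm (polyF x) * sdist (α * polyF x - θ)) :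
    ENNReal.ofReal ε ≤ sBadLiminf α θ := by
  refine le_liminf_of_le (by isBoundedDefault) ?_
  filter_upwards [(eventually_gt_atTop (0 : ℝ)).comap _] with x hx
  refine ENNReal.ofReal_le_ofReal (h x ?_)
  rintro rfl
  exact hx.ne' (fnorm_eq_zero.2 polyF_zero)

/-- From `Q θ = x (Q α) - Q (α x - θ)`: the first digit of `x (Q α)` vanishes when `Q` approximates
`α` well enough for `deg x`, so `α x - θ` cannot be small. -/
lemma avoidingSet_subset_sBad (α : FF K) : avoidingSet α ⊆ sBad α ((q : ℝ) ^ 2)⁻¹ := by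
  refine fun θ hθ ↦ ⟨hθ.1, le_sBadLiminf fun x hx ↦ ?_⟩
  obtain ⟨Q, hQ, hQdeg, hQα⟩ := exists_isConvergentDenominator α (x.natDegree + 1)
  have hfar : firstDigits (x.natDegree + 2) (α * polyF x - θ) ≠ 0 := by
    intro hclose
    have hxQα : digit 0 (polyF x * (polyF Q * α)) = 0 :=
      firstDigits_eq_zero_iff.1 (firstDigits_polyF_mul_eq_zero (k := 1) (P := x)
        (firstDigits_eq_zero_of_le (by lia) hQα)) 0 one_pos
    have hQclose : digit 0 (polyF Q * (α * polyF x - θ)) = 0 :=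
      firstDigits_eq_zero_iff.1 (firstDigits_polyF_mul_eq_zero (k := 1) (P := Q)
        (firstDigits_eq_zero_of_le (by lia) hclose)) 0 one_pos
    refine hθ.2 Q hQ ?_
    rw [show polyF Q * θ = polyF x * (polyF Q * α) - polyF Q * (α * polyF x - θ) by ring,
      map_sub, hxQα, hQclose, sub_zero]
  rw [fnorm_polyF hx]
  calc ((q : ℝ) ^ 2)⁻¹ = (q : ℝ) ^ x.natDegree * ((q : ℝ) ^ (x.natDegree + 2))⁻¹ := by
        rw [pow_add]
        field_simp
    _ ≤ (q : ℝ) ^ x.natDegree * sdist (α * polyF x - θ) := by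
      gcongr
      exact not_lt.1 (sdist_lt_iff.not.2 hfar)

end AvoidingSet

section FreeDigits

lemma holderOnWith_of_dist_le {X Y : Type*} [PseudoMetricSpace X] [PseudoMetricSpace Y]
    {f : X → Y} {s : Set X} {C r : ℝ≥0}
    (h : ∀ x ∈ s, ∀ y ∈ s, dist (f x) (f y) ≤ C * dist x y ^ (r : ℝ)) : HolderOnWith C r f s := by
  intro x hx y hy
  rw [edist_nndist, edist_nndist, ← ENNReal.coe_rpow_of_nonneg _ r.coe_nonneg,
    ← ENNReal.coe_mul, ENNReal.coe_le_coe]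
  exact h x hx y hy

lemma holderOnWith_of_firstDigits {Y : Type*} [PseudoMetricSpace Y] {f : FF K → Y}
    {E : Set (FF K)} (hE : ∀ θ ∈ E, fnorm θ < 1) {C r : ℝ≥0}
    (h : ∀ x ∈ E, ∀ y ∈ E, ∀ n, firstDigits n x = firstDigits n y →
      dist (f x) (f y) ≤ C * ((q : ℝ) ^ (n + 1))⁻¹ ^ (r : ℝ)) : HolderOnWith C r f E := by
  refine holderOnWith_of_dist_le fun x hx y hy ↦ ?_
  obtain rfl | hxy := eq_or_ne x y
  · rw [dist_self]
    positivity
  have hq := one_lt_q (K := K)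
  have hlt : dist x y < ((q : ℝ) ^ 0)⁻¹ :=
    (dist_lt_iff_firstDigits_eq (hE x hx) (hE y hy)).2 (Subsingleton.elim _ _)
  rw [pow_zero, inv_one] at hlt
  obtain ⟨n, hn⟩ := exists_fnorm_eq_inv_pow hlt (sub_ne_zero.2 hxy)
  replace hn : dist x y = ((q : ℝ) ^ (n + 1))⁻¹ := hn
  rw [hn]
  refine h x hx y hy n ((dist_lt_iff_firstDigits_eq (hE x hx) (hE y hy)).1 (hn.trans_lt ?_))
  gcongr
  exact n.lt_succ_self

/-- The real number in `[0, 1]` whose base `q` digits are the digits of `θ` at the positions off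
`S`. -/
def freeExpansion (S : Set ℕ) (θ : FF K) : ℝ :=
  Real.ofDigits fun i ↦ Fintype.equivFin K (digit (Nat.nth (· ∈ Sᶜ) i) θ)

variable {S : Set ℕ}

lemma dist_freeExpansion_le (hS : Sᶜ.Infinite) {x y : FF K} {n : ℕ}
    (hxy : firstDigits n x = firstDigits n y) :
    dist (freeExpansion S x) (freeExpansion S y) ≤ ((q : ℝ) ^ Nat.count (· ∈ Sᶜ) n)⁻¹ :=
  Real.abs_ofDigits_sub_ofDigits_le fun _ hi ↦ congrArg (Fintype.equivFin K)
    (firstDigits_eq_iff.1 hxy _ ((Nat.lt_nth_iff_count_lt hS).1 hi))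

lemma exists_holderOnWith_freeExpansion (hS : HasDensityZero S) {E : Set (FF K)}
    (hE : ∀ θ ∈ E, fnorm θ < 1) {r : ℝ≥0} (hr : r < 1) :
    ∃ C, HolderOnWith C r (freeExpansion S) E := by
  have hq := one_lt_q (K := K)
  obtain ⟨C, hC⟩ := hS.exists_count_le (sub_pos.2 (show (r : ℝ) < 1 from hr))
  refine ⟨(q : ℝ≥0) ^ (C + 1), holderOnWith_of_firstDigits hE fun x _ y _ n hxy ↦ ?_⟩
  refine (dist_freeExpansion_le hS.infinite_compl hxy).trans ?_
  push_cast
  rw [← Real.rpow_natCast, ← Real.rpow_natCast, ← Real.rpow_natCast,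
    ← Real.rpow_neg (by positivity), ← Real.rpow_neg (by positivity),
    ← Real.rpow_mul (by positivity), ← Real.rpow_add (by positivity)]
  refine Real.rpow_le_rpow_of_exponent_le hq.le ?_
  have hsum : (Nat.count (· ∈ S) n : ℝ) + Nat.count (· ∈ Sᶜ) n = n := by
    exact_mod_cast count_add_count_compl S n
  push_cast
  nlinarith [hC n, show (r : ℝ) < 1 from hr]

lemma Icc_subset_image_freeExpansion (hS : Sᶜ.Infinite) {E : Set (FF K)}
    (hfree : ∀ b : ℕ → K, ∃ θ ∈ E, ∀ n ∉ S, digit n θ = b n) :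
    Set.Icc 0 1 ⊆ freeExpansion S '' E := by
  intro y hy
  obtain ⟨a, -, rfl⟩ := Real.ofDigits_SurjOn (b := q) Fintype.one_lt_card hy
  obtain ⟨θ, hθ, hdigit⟩ := hfree fun n ↦ (Fintype.equivFin K).symm (a (Nat.count (· ∈ Sᶜ) n))
  refine ⟨θ, hθ, congrArg Real.ofDigits (funext fun i ↦ ?_)⟩
  have hmem : Nat.nth (· ∈ Sᶜ) i ∈ Sᶜ := Nat.nth_mem_of_infinite hS i
  have hcount : Nat.count (· ∈ Sᶜ) (Nat.nth (· ∈ Sᶜ) i) = i := Nat.count_nth_of_infinite hS i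
  rw [hdigit _ hmem, Equiv.apply_symm_apply, hcount]

theorem one_le_dimH_of_free_digits (hS : HasDensityZero S) {E : Set (FF K)}
    (hE : ∀ θ ∈ E, fnorm θ < 1) (hfree : ∀ b : ℕ → K, ∃ θ ∈ E, ∀ n ∉ S, digit n θ = b n) :
    1 ≤ dimH E := by
  have himage : 1 ≤ dimH (freeExpansion S '' E) := by
    refine le_trans ?_ (dimH_mono (Icc_subset_image_freeExpansion hS.infinite_compl hfree))
    rw [Real.dimH_of_nonempty_interior (by simp), Module.finrank_self, Nat.cast_one]
  refine ENNReal.le_of_forall_pos_nnreal_lt fun r hr0 hr1 ↦ ?_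
  obtain ⟨C, hC⟩ := exists_holderOnWith_freeExpansion hS hE (show r < 1 by exact_mod_cast hr1)
  have hdim := himage.trans (hC.dimH_image_le hr0)
  rwa [ENNReal.le_div_iff_mul_le (.inl (by exact_mod_cast hr0.ne')) (.inl ENNReal.coe_ne_top),
    one_mul] at hdim

theorem one_le_dimH_sBad {α : FF K} (hα : HasDensityZero (convergentDegrees α)) :
    1 ≤ dimH (sBad α ((q : ℝ) ^ 2)⁻¹) :=
  (one_le_dimH_of_free_digits hα (fun _ hθ ↦ hθ.1) (exists_mem_avoidingSet α)).trans
    (dimH_mono (avoidingSet_subset_sBad α))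

end FreeDigits

section Prefixes

/-- The words of length `n` with which the digit expansion of some element of `B` begins. -/
def prefixes (B : Set (FF K)) (n : ℕ) : Finset (Fin n → K) :=
  {w | ∃ θ ∈ B, firstDigits n θ = w}

/-- The proportion, among all words of length `n`, of those that are prefixes of elements of
`B`. -/
def prefixDensity (B : Set (FF K)) (n : ℕ) : ℝ :=
  (prefixes B n).card / (q : ℝ) ^ n

variable {B : Set (FF K)} {n : ℕ}

lemma mem_prefixes {w : Fin n → K} : w ∈ prefixes B n ↔ ∃ θ ∈ B, firstDigits n θ = w := by
  simp [prefixes]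

lemma card_prefixes_eq (B : Set (FF K)) (n : ℕ) :
    ((prefixes B n).card : ℝ) = prefixDensity B n * (q : ℝ) ^ n := by
  rw [prefixDensity, div_mul_cancel₀ _ (by positivity)]

lemma prefixDensity_nonneg (B : Set (FF K)) (n : ℕ) : 0 ≤ prefixDensity B n := by
  unfold prefixDensity
  positivity

lemma prefixDensity_le_one (B : Set (FF K)) (n : ℕ) : prefixDensity B n ≤ 1 := by
  refine div_le_one_of_le₀ ?_ (by positivity)
  have hcard := (prefixes B n).card_le_univ
  rw [Fintype.card_fun, Fintype.card_fin] at hcard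
  exact_mod_cast hcard

lemma ediam_le_of_firstDigits_eq (hB : ∀ θ ∈ B, fnorm θ < 1)
    (h : ∀ x ∈ B, ∀ y ∈ B, firstDigits n x = firstDigits n y) :
    Metric.ediam B ≤ ENNReal.ofReal ((q : ℝ) ^ n)⁻¹ := by
  refine Metric.ediam_le fun x hx y hy ↦ ?_
  rw [edist_dist]
  exact ENNReal.ofReal_le_ofReal
    ((dist_lt_iff_firstDigits_eq (hB x hx) (hB y hy)).2 (h x hx y hy)).le

theorem dimH_le_of_frequently_card_prefixes_le (hB : ∀ θ ∈ B, fnorm θ < 1) {s : ℝ≥0} {C : ℝ}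
    (h : ∃ᶠ n : ℕ in atTop, ((prefixes B n).card : ℝ) ≤ C * (q : ℝ) ^ ((s : ℝ) * n)) :
    dimH B ≤ s := by
  have hq := one_lt_q (K := K)
  have hradius : Tendsto (fun n : ℕ ↦ ENNReal.ofReal ((q : ℝ) ^ n)⁻¹) atTop (nhds 0) := by
    simpa using ENNReal.tendsto_ofReal
      (tendsto_inv_atTop_zero.comp (tendsto_pow_atTop_atTop_of_one_lt hq))
  have hdiam (n : ℕ) (w : prefixes B n) :
      Metric.ediam {θ | θ ∈ B ∧ firstDigits n θ = w} ≤ ENNReal.ofReal ((q : ℝ) ^ n)⁻¹ :=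
    ediam_le_of_firstDigits_eq (fun θ hθ ↦ hB θ hθ.1) fun x hx y hy ↦ hx.2.trans hy.2.symm
  have hmeasure := Measure.hausdorffMeasure_le_liminf_sum (s : ℝ) B _ hradius
    (fun n (w : prefixes B n) ↦ {θ | θ ∈ B ∧ firstDigits n θ = w}) (Eventually.of_forall hdiam)
    (Eventually.of_forall fun n θ hθ ↦
      Set.mem_iUnion.2 ⟨⟨firstDigits n θ, mem_prefixes.2 ⟨θ, hθ, rfl⟩⟩, hθ, rfl⟩)
  refine dimH_le_of_hausdorffMeasure_ne_top
    (ne_top_of_le_ne_top (ENNReal.ofReal_ne_top (r := C)) (hmeasure.trans ?_))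
  refine liminf_le_of_frequently_le (h.mono fun n hn ↦ ?_) (by isBoundedDefault)
  calc ∑ w : prefixes B n, Metric.ediam {θ | θ ∈ B ∧ firstDigits n θ = w} ^ (s : ℝ)
      ≤ ∑ _w : prefixes B n, ENNReal.ofReal ((q : ℝ) ^ n)⁻¹ ^ (s : ℝ) :=
        Finset.sum_le_sum fun w _ ↦ ENNReal.rpow_le_rpow (hdiam n w) s.coe_nonneg
    _ = ENNReal.ofReal ((prefixes B n).card * ((q : ℝ) ^ n)⁻¹ ^ (s : ℝ)) := by
        rw [Finset.sum_const, Finset.card_univ, Fintype.card_coe, nsmul_eq_mul,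
          ENNReal.ofReal_mul (by positivity), ENNReal.ofReal_natCast,
          ENNReal.ofReal_rpow_of_nonneg (by positivity) s.coe_nonneg]
    _ ≤ ENNReal.ofReal C := by
        refine ENNReal.ofReal_le_ofReal ?_
        rwa [Real.inv_rpow (by positivity), ← Real.rpow_natCast, ← Real.rpow_mul (by positivity),
          mul_comm (n : ℝ), ← div_eq_mul_inv, div_le_iff₀ (by positivity)]

theorem dimH_le_one (hB : ∀ θ ∈ B, fnorm θ < 1) : dimH B ≤ 1 := by
  refine dimH_le_of_frequently_card_prefixes_le hB (s := 1) (C := 1)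
    (Frequently.of_forall fun n ↦ ?_)
  rw [card_prefixes_eq, NNReal.coe_one, one_mul ((n : ℕ) : ℝ), Real.rpow_natCast]
  gcongr
  exact prefixDensity_le_one B n

lemma card_prefixes_add_le {d m k : ℕ} (P : (Fin d → K) → Finset (Fin m → K))
    (hP : ∀ v, (P v).card ≤ k)
    (h : ∀ θ ∈ B, digitBlock d m θ ∈ P (firstDigits d θ)) :
    (prefixes B (d + m)).card ≤ (prefixes B d).card * k := by
  have hsub : prefixes B (d + m) ⊆
      ((prefixes B d).sigma P).image fun w ↦ Fin.append w.1 w.2 := by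
    intro w hw
    obtain ⟨θ, hθ, rfl⟩ := mem_prefixes.1 hw
    exact Finset.mem_image.2 ⟨⟨firstDigits d θ, digitBlock d m θ⟩,
      Finset.mem_sigma.2 ⟨mem_prefixes.2 ⟨θ, hθ, rfl⟩, h θ hθ⟩, append_firstDigits_digitBlock d m θ⟩
  refine (Finset.card_le_card hsub).trans (Finset.card_image_le.trans ?_)
  rw [Finset.card_sigma]
  exact Finset.sum_le_card_nsmul _ _ _ fun v _ ↦ hP v

lemma prefixDensity_add_le {d m k : ℕ} (P : (Fin d → K) → Finset (Fin m → K))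
    (hP : ∀ v, (P v).card ≤ k)
    (h : ∀ θ ∈ B, digitBlock d m θ ∈ P (firstDigits d θ)) :
    prefixDensity B (d + m) ≤ k / (q : ℝ) ^ m * prefixDensity B d := by
  have hcard : ((prefixes B (d + m)).card : ℝ) ≤ (prefixes B d).card * k := by
    exact_mod_cast card_prefixes_add_le P hP h
  rw [prefixDensity, prefixDensity, div_mul_div_comm, mul_comm (k : ℝ), ← pow_add, add_comm m]
  gcongr

lemma antitone_prefixDensity (B : Set (FF K)) : Antitone (prefixDensity B) := by
  refine antitone_nat_of_succ_le fun n ↦ ?_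
  have h := prefixDensity_add_le (B := B) (d := n) (m := 1) (k := q) (fun _ ↦ Finset.univ)
    (fun _ ↦ by simp) fun _ _ ↦ Finset.mem_univ _
  rwa [pow_one, div_self (by positivity), one_mul] at h

variable {T : Set ℕ} {m : ℕ} {τ : ℝ}

lemma prefixDensity_le_rpow_count
    (hT : ∀ n ∈ T, prefixDensity B (n + (m + 1)) ≤
      (q : ℝ) ^ (-τ * (m + 1 : ℕ)) * prefixDensity B n) (n : ℕ) :
    prefixDensity B (n + m) ≤ (q : ℝ) ^ (-τ * Nat.count (· ∈ T) n) := by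
  have hpow := pow_le_pow_count (antitone_prefixDensity B) (prefixDensity_nonneg B)
    (prefixDensity_le_one B 0) (by positivity) hT n
  rw [← Real.rpow_mul_natCast (by positivity), mul_right_comm,
    Real.rpow_mul_natCast (by positivity)] at hpow
  exact le_of_pow_le_pow_left₀ m.succ_ne_zero (by positivity) hpow

theorem dimH_le_of_prefixDensity_le (hB : ∀ θ ∈ B, fnorm θ < 1) (hτ : 0 ≤ τ)
    (hT : ∀ n ∈ T, prefixDensity B (n + (m + 1)) ≤
      (q : ℝ) ^ (-τ * (m + 1 : ℕ)) * prefixDensity B n)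
    {η : ℝ} {N : ℕ} (hcount : ∃ᶠ n : ℕ in atTop, η * n ≤ Nat.count (· ∈ T) n + N)
    {s : ℝ≥0} (hs : 1 - η * τ ≤ s) : dimH B ≤ s := by
  have hq := one_lt_q (K := K)
  refine dimH_le_of_frequently_card_prefixes_le hB (C := (q : ℝ) ^ (η * τ * m + τ * N))
    ((tendsto_add_atTop_nat m).frequently (hcount.mono fun n hn ↦ ?_))
  calc ((prefixes B (n + m)).card : ℝ) = prefixDensity B (n + m) * (q : ℝ) ^ (n + m) :=
        card_prefixes_eq B _
    _ ≤ (q : ℝ) ^ (-τ * Nat.count (· ∈ T) n) * (q : ℝ) ^ (n + m) := by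
        gcongr
        exact prefixDensity_le_rpow_count hT n
    _ = (q : ℝ) ^ (-τ * Nat.count (· ∈ T) n + (n + m : ℕ)) := by
        rw [Real.rpow_add_natCast (by positivity)]
    _ ≤ (q : ℝ) ^ (η * τ * m + τ * N + s * (n + m : ℕ)) := by
        refine Real.rpow_le_rpow_of_exponent_le hq.le ?_
        have := mul_le_mul_of_nonneg_left hn hτ
        have := mul_le_mul_of_nonneg_right hs (n + m).cast_nonneg
        push_cast at *
        linarith
    _ = (q : ℝ) ^ (η * τ * m + τ * N) * (q : ℝ) ^ ((s : ℝ) * (n + m : ℕ)) :=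
        Real.rpow_add (by positivity) _ _

end Prefixes

section UniformlyBad

/-- The set of `θ ∈ 𝕀` with `‖x‖ ⟨α x - θ⟩ ≥ ε` for every nonzero `x` of degree at least `N`. -/
def uniformlyBad (α : FF K) (ε : ℝ) (N : ℕ) : Set (FF K) :=
  {θ | fnorm θ < 1 ∧ ∀ x : Polynomial K, x ≠ 0 → N ≤ x.natDegree →
    ε ≤ fnorm (polyF x) * sdist (α * polyF x - θ)}

variable {α : FF K}

lemma sBad_subset_iUnion_uniformlyBad {δ ε : ℝ} (hδ : δ < ε) (hε : 0 < ε) :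
    sBad α ε ⊆ ⋃ N, uniformlyBad α δ N := by
  rintro θ ⟨hθ, hbad⟩
  have hq := one_lt_q (K := K)
  have hlt : ENNReal.ofReal δ < sBadLiminf α θ :=
    ((ENNReal.ofReal_lt_ofReal_iff hε).2 hδ).trans_le hbad
  obtain ⟨a, ha⟩ := eventually_atTop.1 (eventually_comap.1 (eventually_lt_of_lt_liminf hlt))
  obtain ⟨N, hN⟩ := pow_unbounded_of_one_lt a hq
  refine Set.mem_iUnion.2 ⟨N, hθ, fun x hx hxN ↦ ?_⟩
  have hax : a ≤ fnorm (polyF x) := by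
    rw [fnorm_polyF hx]
    exact hN.le.trans (pow_le_pow_right₀ hq.le hxN)
  exact (ENNReal.ofReal_lt_ofReal_iff'.1 (ha _ hax x rfl)).1.le

variable {m N : ℕ} {θ : FF K}

lemma firstDigits_ne_of_mem_uniformlyBad (hθ : θ ∈ uniformlyBad α ((q : ℝ) ^ m)⁻¹ N)
    {x : Polynomial K} (hx : x ≠ 0) (hxN : N ≤ x.natDegree) :
    firstDigits (x.natDegree + m) (α * polyF x) ≠ firstDigits (x.natDegree + m) θ := by
  intro h
  have hclose : sdist (α * polyF x - θ) < ((q : ℝ) ^ (x.natDegree + m))⁻¹ :=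
    sdist_lt_iff.2 (by rw [map_sub, h, sub_self])
  refine (hθ.2 x hx hxN).not_gt ?_
  calc fnorm (polyF x) * sdist (α * polyF x - θ)
      < (q : ℝ) ^ x.natDegree * ((q : ℝ) ^ (x.natDegree + m))⁻¹ := by
        rw [fnorm_polyF hx]
        gcongr
    _ = ((q : ℝ) ^ m)⁻¹ := by
        rw [pow_add]
        field_simp

/-- Every prefix `v` of length `d` is the prefix of `x α` for some `x` of degree `d`, and the next
`m` digits of `x α` cannot follow `v`. -/
lemma prefixDensity_uniformlyBad_add_le {d : ℕ} (hd : d ∈ convergentDegrees α) (hN : N ≤ d) :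
    prefixDensity (uniformlyBad α ((q : ℝ) ^ m)⁻¹ N) (d + m) ≤
      (1 - ((q : ℝ) ^ m)⁻¹) * prefixDensity (uniformlyBad α ((q : ℝ) ^ m)⁻¹ N) d := by
  choose X hmonic hdeg hprefix using exists_monic_firstDigits_eq hd
  have hforbidden (θ : FF K) (hθ : θ ∈ uniformlyBad α ((q : ℝ) ^ m)⁻¹ N) :
      digitBlock d m θ ≠ digitBlock d m (polyF (X (firstDigits d θ)) * α) := by
    intro h
    have hne := firstDigits_ne_of_mem_uniformlyBad hθ (hmonic (firstDigits d θ)).ne_zero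
      (hN.trans_eq (hdeg _).symm)
    rw [hdeg, ← append_firstDigits_digitBlock, ← append_firstDigits_digitBlock, mul_comm, hprefix,
      h] at hne
    exact hne rfl
  have h := prefixDensity_add_le (k := q ^ m - 1)
    (fun v ↦ Finset.univ.erase (digitBlock d m (polyF (X v) * α)))
    (fun v ↦ by simp [Finset.card_erase_of_mem])
    fun θ hθ ↦ Finset.mem_erase.2 ⟨hforbidden θ hθ, Finset.mem_univ _⟩
  rwa [Nat.cast_pred (by positivity), Nat.cast_pow, sub_div, div_self (by positivity),
    one_div] at h

lemma exists_dimH_uniformlyBad_le (hα : ¬ HasDensityZero (convergentDegrees α)) (m : ℕ) :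
    ∃ s : ℝ≥0, s < 1 ∧ ∀ N, dimH (uniformlyBad α ((q : ℝ) ^ (m + 1))⁻¹ N) ≤ s := by
  have hq := one_lt_q (K := K)
  obtain ⟨η, hη, hfreq⟩ := exists_frequently_le_count_of_not_hasDensityZero hα
  obtain ⟨ρ, hρ⟩ : ∃ ρ : ℝ, 1 - ((q : ℝ) ^ (m + 1))⁻¹ = ρ := ⟨_, rfl⟩
  have hρ0 : 0 < ρ := hρ ▸ sub_pos.2 (inv_lt_one_of_one_lt₀ (one_lt_pow₀ hq m.succ_ne_zero))
  have hρ1 : ρ < 1 := hρ ▸ sub_lt_self 1 (by positivity)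
  obtain ⟨τ, hτ, hρτ⟩ : ∃ τ > (0 : ℝ), ρ = (q : ℝ) ^ (-τ * (m + 1 : ℕ)) := by
    refine ⟨-Real.logb q ρ / (m + 1 : ℕ),
      div_pos (neg_pos.2 (Real.logb_neg hq hρ0 hρ1)) (by positivity), ?_⟩
    rw [← neg_div, neg_neg, div_mul_cancel₀ _ (by positivity),
      Real.rpow_logb (by positivity) hq.ne' hρ0]
  refine ⟨(1 - η * τ).toNNReal, Real.toNNReal_lt_one.2 (sub_lt_self 1 (mul_pos hη hτ)), fun N ↦ ?_⟩
  have hdecay (d : ℕ) (hd : d ∈ convergentDegrees α ∩ Set.Ici N) :=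
    prefixDensity_uniformlyBad_add_le (m := m + 1) hd.1 hd.2
  simp only [hρ, hρτ] at hdecay
  refine dimH_le_of_prefixDensity_le (N := N) (fun θ hθ ↦ hθ.1) hτ.le hdecay
    (hfreq.mono fun n hn ↦ hn.trans ?_) (Real.le_coe_toNNReal _)
  exact_mod_cast count_le_count_add_of_inter_Ici_subset subset_rfl n

theorem dimH_sBad_lt_one (hα : ¬ HasDensityZero (convergentDegrees α)) {ε : ℝ} (hε : 0 < ε) :
    dimH (sBad α ε) < 1 := by
  obtain ⟨m, hm⟩ : ∃ m : ℕ, ((q : ℝ) ^ (m + 1))⁻¹ < ε :=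
    (((tendsto_inv_atTop_zero.comp (tendsto_pow_atTop_atTop_of_one_lt one_lt_q)).comp
      (tendsto_add_atTop_nat 1)).eventually_lt_const hε).exists
  obtain ⟨s, hs, hdim⟩ := exists_dimH_uniformlyBad_le hα m
  calc dimH (sBad α ε) ≤ dimH (⋃ N, uniformlyBad α ((q : ℝ) ^ (m + 1))⁻¹ N) :=
        dimH_mono (sBad_subset_iUnion_uniformlyBad hm hε)
    _ = ⨆ N, dimH (uniformlyBad α ((q : ℝ) ^ (m + 1))⁻¹ N) := dimH_iUnion _
    _ ≤ s := iSup_le hdim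
    _ < 1 := ENNReal.coe_lt_one_iff.2 hs

end UniformlyBad

end FPSDA

theorem dimH_sBad_iff_singular_general {K : Type*} [Field K] [Fintype K] (α : FF K) :
    (∃ ε : ℝ, 0 < ε ∧ dimH (sBad α ε) = 1) ↔ SingularOnAverage α := by
  rw [singularOnAverage_iff_hasDensityZero]
  constructor
  · rintro ⟨ε, hε, hdim⟩
    by_contra hα
    exact (dimH_sBad_lt_one hα hε).ne hdim
  · intro hα
    exact ⟨((Fintype.card K : ℝ) ^ 2)⁻¹, by positivity,
      (dimH_le_one fun _ hθ ↦ hθ.1).antisymm (one_le_dimH_sBad hα)⟩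

/-- For an irrational `α ∈ 𝕀`: there exists `ε > 0` such that `Bad^ε(α)` has full
Hausdorff dimension if and only if `α` is singular on average. -/
theorem dimH_sBad_iff_singular {K : Type*} [Field K] [Fintype K]
    (α : FF K) (hα : fnorm α < 1) (hirr : FIrrational α) :
    (∃ ε : ℝ, 0 < ε ∧ dimH (sBad α ε) = 1) ↔ SingularOnAverage α :=
  dimH_sBad_iff_singular_general α
end
end

section
/- Let m, n be positive integers, A = (α_{ij}) ∈ M_{n,m}(𝔽_q((z⁻¹))), α = (α_1, …, α_n) ∈ 𝔽_q((z⁻¹))ⁿ, and s, t positive integers. Suppose that for every polynomial vector u = (u_1, …, u_n) ∈ 𝔽_q[z]ⁿ one has ⟨u_1α_1 + ⋯ + u_nα_n⟩ ≤ max{ q^t · max_{1≤j≤m} ⟨M_j(u)⟩, q^{−s} · ‖u‖ }. Then there exists a polynomial vector b ∈ 𝔽_q[z]^m with ‖b‖ ≤ q^t and ⟨L_i(b) − α_i⟩ ≤ q^{−s} for all 1 ≤ i ≤ n. -/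
/-!
Common setup: the field `𝔽_q((z⁻¹))` of formal power series over a finite field `K` of
cardinality `q`, modeled as the field `FF K` of formal Laurent series in `t = z⁻¹`,
together with its non-Archimedean norm, the embedding of the polynomial ring `𝔽_q[z]`,
distances to polynomial (vectors), Diophantine exponents, `Bad` sets, continued fractions
and best approximation sequences.
-/

open scoped Classical ENNReal NNReal
open Filter

noncomputable section

open FPSDA MeasureTheory

/-! Only two things matter: the coefficients of `z⁻¹, z⁻², …` in `A b`, which depend linearly on the
coefficients of `b` through a block Hankel matrix, and the fact that transposing this matrix
amounts to transposing `A`. Solving `⟨L_i(b) - α_i⟩ ≤ q^{-s}` with `‖b‖ ≤ q^t` is thus a linear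
system over `K`. If it has no solution, the Fredholm alternative yields a `u` with
`‖u‖ ≤ q^{s-2}` and all `⟨M_j(u)⟩ ≤ q^{-t-2}` for which the coefficient of `z⁻¹` in `∑ u_i α_i`
does not vanish; so the left side of the hypothesis is `q⁻¹` and the right side at most `q⁻²`. -/

namespace FPSDA

open Polynomial Matrix

section FredholmAlternative

variable {K ι κ : Type*} [Field K] [Fintype ι] [Fintype κ]

lemma exists_mulVec_eq_of_forall_vecMul_eq_zero (M : Matrix ι κ K) (v : ι → K)
    (h : ∀ y, y ᵥ* M = 0 → y ⬝ᵥ v = 0) : ∃ x, M *ᵥ x = v := by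
  suffices hv : v ∈ LinearMap.range M.mulVecLin from hv
  refine (Subspace.forall_mem_dualAnnihilator_apply_eq_zero_iff _ v).mp fun φ hφ => ?_
  obtain ⟨y, rfl⟩ := (dotProductEquiv K ι).surjective φ
  refine h y (dotProduct_eq_zero _ fun x => ?_)
  rw [← dotProduct_mulVec]
  exact (Submodule.mem_dualAnnihilator _).mp hφ _ ⟨x, rfl⟩

end FredholmAlternative

section Coefficients

variable {K : Type*} [Field K]

/-- The embedding `K[z] → K((z⁻¹))` of `polyF`, as an algebra homomorphism; a Laurent series is
written in the variable `z⁻¹`, so its coefficient at `i` is that of `z⁻ⁱ`. -/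
def polyHom : K[X] →ₐ[K] LaurentSeries K := aeval (HahnSeries.single (-1 : ℤ) (1 : K))

lemma polyHom_monomial (k : ℕ) (a : K) :
    polyHom (monomial k a) = HahnSeries.single (-(k : ℤ)) a := by
  rw [polyHom, aeval_monomial, HahnSeries.single_pow, HahnSeries.algebraMap_apply',
    PowerSeries.algebraMap_apply, Algebra.algebraMap_self, RingHom.id_apply,
    HahnSeries.ofPowerSeries_C, HahnSeries.C_apply, HahnSeries.single_mul_single]
  simp

lemma coeff_polyHom_mul (P : K[X]) (x : LaurentSeries K) (i : ℤ) :
    (polyHom P * x).coeff i = P.sum fun l a => a * x.coeff (i + l) := by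
  induction P using Polynomial.induction_on' with
  | add P Q hP hQ =>
    rw [map_add, add_mul, HahnSeries.coeff_add, hP, hQ,
      sum_add_index _ _ _ (fun _ => zero_mul _) (fun _ _ _ => add_mul _ _ _)]
  | monomial k a =>
    rw [polyHom_monomial, HahnSeries.coeff_single_mul, sub_neg_eq_add,
      sum_monomial_index a (fun l a => a * x.coeff (i + l)) (zero_mul _)]

lemma coeff_polyHom_mul_of_degree_lt {P : K[X]} {N : ℕ} (hP : P.degree < N)
    (x : LaurentSeries K) (i : ℤ) :
    (polyHom P * x).coeff i = ∑ l : Fin N, P.coeff l * x.coeff (i + (l : ℕ)) := by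
  rw [coeff_polyHom_mul, sum_fin (fun l a => a * x.coeff (i + l)) (fun _ => zero_mul _) hP]

lemma coeff_polyHom (P : K[X]) (i : ℤ) :
    (polyHom P).coeff i = if i ≤ 0 then P.coeff (-i).toNat else 0 := by
  induction P using Polynomial.induction_on' with
  | add P Q hP hQ =>
    rw [map_add, HahnSeries.coeff_add, hP, hQ, coeff_add]
    split_ifs <;> simp
  | monomial k a =>
    rw [polyHom_monomial, HahnSeries.coeff_single, coeff_monomial]
    grind

lemma coeff_polyHom_of_pos (P : K[X]) {i : ℤ} (hi : 0 < i) : (polyHom P).coeff i = 0 := by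
  rw [coeff_polyHom, if_neg hi.not_ge]

lemma coeff_intPoly (x : LaurentSeries K) (k : ℕ) :
    (intPoly x).coeff k = x.coeff (-(k : ℤ)) := by
  simp only [intPoly, toL, finsetSum_coeff, coeff_monomial, Finset.sum_ite_eq', Finset.mem_range]
  refine ite_eq_left_iff.mpr fun hk => ?_
  exact (HahnSeries.coeff_eq_zero_of_lt_order (by omega)).symm

end Coefficients

section Norm

variable {K : Type*} [Field K] {c : ℝ}

/-- The absolute value `c ^ deg x` on `K((z⁻¹))`, with `0` at `0`; `fnorm` is the case
`c = #K`. -/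
def degNorm (c : ℝ) (x : LaurentSeries K) : ℝ := if x = 0 then 0 else c ^ (-x.order)

/-- The norm `max_j |b_j|` of a polynomial vector `b` for the absolute value `degNorm c`;
`pnorm` is the case `c = #K`. -/
def polyNorm {ι : Type*} (c : ℝ) (b : ι → K[X]) : ℝ := ⨆ j, degNorm c (polyHom (b j))

/-- The distance from `x` to the polynomials for the absolute value `degNorm c`; `sdist` is the
case `c = #K`. -/
def polyDist (c : ℝ) (x : LaurentSeries K) : ℝ := ⨅ y : K[X], degNorm c (x - polyHom y)

lemma degNorm_nonneg (hc : 0 ≤ c) (x : LaurentSeries K) : 0 ≤ degNorm c x := by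
  unfold degNorm
  split_ifs <;> positivity

lemma degNorm_le_zpow (hc : 1 ≤ c) {x : LaurentSeries K} {N : ℤ}
    (hx : ∀ i < N, x.coeff i = 0) : degNorm c x ≤ c ^ (-N) := by
  unfold degNorm
  split_ifs with h0
  · positivity
  · exact zpow_le_zpow_right₀ hc (neg_le_neg ((HahnSeries.le_order_iff_forall h0).mpr hx))

lemma zpow_le_degNorm (hc : 1 ≤ c) {x : LaurentSeries K} {i : ℤ} (hx : x.coeff i ≠ 0) :
    c ^ (-i) ≤ degNorm c x := by
  rw [degNorm, if_neg (HahnSeries.ne_zero_of_coeff_ne_zero hx)]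
  exact zpow_le_zpow_right₀ hc (neg_le_neg (HahnSeries.order_le_of_coeff_ne_zero hx))

lemma polyNorm_le_zpow (hc : 1 ≤ c) {ι : Type*} {b : ι → K[X]} {d : ℤ}
    (hb : ∀ j, (b j).degree < (d + 1).toNat) : polyNorm c b ≤ c ^ d := by
  refine Real.iSup_le (fun j => ?_) (by positivity)
  rw [← neg_neg d]
  refine degNorm_le_zpow hc fun i hi => ?_
  rw [coeff_polyHom, ite_eq_right_iff]
  intro hi0
  exact coeff_eq_zero_of_degree_lt ((hb j).trans_le (by norm_cast; omega))

lemma polyDist_le_zpow (hc : 1 ≤ c) {x : LaurentSeries K} {N : ℤ}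
    (hx : ∀ k : ℕ, (k + 1 : ℤ) < N → x.coeff (k + 1) = 0) : polyDist c x ≤ c ^ (-N) := by
  have hbdd : BddBelow (Set.range fun y : K[X] => degNorm c (x - polyHom y)) :=
    ⟨0, Set.forall_mem_range.mpr fun _ => degNorm_nonneg (by positivity) _⟩
  refine (ciInf_le hbdd (intPoly x)).trans (degNorm_le_zpow hc fun i hi => ?_)
  rw [HahnSeries.coeff_sub, coeff_polyHom]
  split_ifs with hi0
  · rw [coeff_intPoly, Int.toNat_of_nonneg (by omega), neg_neg, sub_self]
  · obtain ⟨k, rfl⟩ : ∃ k : ℕ, i = k + 1 := ⟨(i - 1).toNat, by omega⟩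
    rw [hx k hi, sub_zero]

lemma zpow_le_polyDist (hc : 1 ≤ c) {x : LaurentSeries K} {i : ℤ} (hi : 0 < i)
    (hx : x.coeff i ≠ 0) : c ^ (-i) ≤ polyDist c x :=
  le_ciInf fun y => zpow_le_degNorm hc <| by
    rwa [HahnSeries.coeff_sub, coeff_polyHom_of_pos y hi, sub_zero]

end Norm

lemma exists_degree_lt_and_eq_coeff {R κ : Type*} [Semiring R] {N : ℕ} (x : κ × Fin N → R) :
    ∃ b : κ → R[X], (∀ j, (b j).degree < N) ∧ x = fun q => (b q.1).coeff q.2 :=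
  ⟨fun j => ofFn N fun l => x (j, l), fun _ => ofFn_degree_lt _,
    funext fun q => (ofFn_coeff_eq_val_of_lt (fun l => x (q.1, l)) q.2.2).symm⟩

section Hankel

variable {K ι κ : Type*} [Field K]

/-- The block Hankel matrix sending the coefficients of a polynomial vector `b` with entries of
degree less than `N` to the coefficients of `z⁻¹, …, z⁻ʳ` in the entries of `A b`. -/
def hankel (A : Matrix ι κ (LaurentSeries K)) (r N : ℕ) : Matrix (ι × Fin r) (κ × Fin N) K :=
  Matrix.of fun p q => (A p.1 q.1).coeff ((p.2 : ℕ) + (q.2 : ℕ) + 1)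

lemma hankel_transpose (A : Matrix ι κ (LaurentSeries K)) (r N : ℕ) :
    (hankel A r N)ᵀ = hankel Aᵀ N r := by
  ext p q
  simp only [hankel, transpose_apply, of_apply, add_comm ((p.2 : ℕ) : ℤ)]

lemma hankel_mulVec [Fintype κ] (A : Matrix ι κ (LaurentSeries K)) (r : ℕ) {N : ℕ} {b : κ → K[X]}
    (hb : ∀ j, (b j).degree < N) (p : ι × Fin r) :
    (hankel A r N *ᵥ fun q => (b q.1).coeff q.2) p =
      ((A *ᵥ fun j => polyHom (b j)) p.1).coeff ((p.2 : ℕ) + 1) := by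
  simp only [mulVec, dotProduct, hankel, of_apply, HahnSeries.coeff_sum, Fintype.sum_prod_type]
  refine Finset.sum_congr rfl fun j _ => ?_
  rw [mul_comm (A p.1 j), coeff_polyHom_mul_of_degree_lt (hb j)]
  refine Finset.sum_congr rfl fun l _ => ?_
  rw [mul_comm, add_right_comm]

theorem exists_coeff_mulVec_eq_of_forall_transpose [Fintype ι] [Fintype κ]
    (A : Matrix ι κ (LaurentSeries K)) (α : ι → LaurentSeries K) (r N : ℕ)
    (h : ∀ u : ι → K[X], (∀ i, (u i).degree < r) →
      (∀ j, ∀ k < N, ((Aᵀ *ᵥ fun i => polyHom (u i)) j).coeff (k + 1) = 0) →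
      (∑ i, polyHom (u i) * α i).coeff 1 = 0) :
    ∃ b : κ → K[X], (∀ j, (b j).degree < N) ∧
      ∀ i, ∀ k < r, ((A *ᵥ fun j => polyHom (b j)) i).coeff (k + 1) = (α i).coeff (k + 1) := by
  obtain ⟨x, hx⟩ : ∃ x, hankel A r N *ᵥ x = fun p => (α p.1).coeff ((p.2 : ℕ) + 1) := by
    refine exists_mulVec_eq_of_forall_vecMul_eq_zero _ _ fun y hy => ?_
    obtain ⟨u, hu, rfl⟩ := exists_degree_lt_and_eq_coeff y
    rw [← mulVec_transpose, hankel_transpose] at hy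
    have hu_orth : (∑ i, polyHom (u i) * α i).coeff 1 = 0 := h u hu fun j k hk => by
      rw [← hankel_mulVec Aᵀ N hu (j, ⟨k, hk⟩), hy, Pi.zero_apply]
    simpa only [HahnSeries.coeff_sum, coeff_polyHom_mul_of_degree_lt (hu _), dotProduct,
      Fintype.sum_prod_type, add_comm (1 : ℤ)] using hu_orth
  obtain ⟨b, hb, rfl⟩ := exists_degree_lt_and_eq_coeff x
  exact ⟨b, hb, fun i k hk =>
    (hankel_mulVec A r hb (i, ⟨k, hk⟩)).symm.trans (congrFun hx (i, ⟨k, hk⟩))⟩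

end Hankel

theorem transference_corollary_general {K ι κ : Type*} [Field K] [Fintype ι] [Fintype κ] {c : ℝ}
    (hc : 1 < c) (A : Matrix ι κ (LaurentSeries K)) (α : ι → LaurentSeries K) (s t : ℤ)
    (h : ∀ u : ι → K[X], polyDist c (∑ i, polyHom (u i) * α i) ≤
      max (c ^ t * ⨆ j, polyDist c ((Aᵀ *ᵥ fun i => polyHom (u i)) j))
        (c ^ (-s) * polyNorm c u)) :
    ∃ b : κ → K[X], polyNorm c b ≤ c ^ t ∧
      ∀ i, polyDist c ((A *ᵥ fun j => polyHom (b j)) i - α i) ≤ c ^ (-s) := by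
  have hcriterion (u : ι → K[X]) (hu : ∀ i, (u i).degree < (s - 1).toNat)
      (hAu : ∀ j, ∀ k < (t + 1).toNat,
        ((Aᵀ *ᵥ fun i => polyHom (u i)) j).coeff (k + 1) = 0) :
      (∑ i, polyHom (u i) * α i).coeff 1 = 0 := by
    have hM : ⨆ j, polyDist c ((Aᵀ *ᵥ fun i => polyHom (u i)) j) ≤ c ^ (-(t + 2)) :=
      Real.iSup_le (fun j => polyDist_le_zpow hc.le fun k hk => hAu j k (by omega)) (by positivity)
    have hnorm : polyNorm c u ≤ c ^ (s - 2) :=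
      polyNorm_le_zpow hc.le (by rwa [show s - 2 + 1 = s - 1 by ring])
    have hdist : polyDist c (∑ i, polyHom (u i) * α i) ≤ c ^ (-2 : ℤ) := calc
      _ ≤ max (c ^ t * c ^ (-(t + 2))) (c ^ (-s) * c ^ (s - 2)) := by grw [h u, hM, hnorm]
      _ = c ^ (-2 : ℤ) := by
        rw [← zpow_add₀ (by positivity), ← zpow_add₀ (by positivity),
          show t + -(t + 2) = -2 by ring, show -s + (s - 2) = -2 by ring, max_self]
    by_contra hcoeff
    have hlow := (zpow_le_polyDist hc.le one_pos hcoeff).trans hdist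
    exact absurd ((zpow_le_zpow_iff_right₀ hc).mp hlow) (by norm_num)
  obtain ⟨b, hb, hbα⟩ := exists_coeff_mulVec_eq_of_forall_transpose A α _ _ hcriterion
  refine ⟨b, polyNorm_le_zpow hc.le hb, fun i => polyDist_le_zpow hc.le fun k hk => ?_⟩
  rw [HahnSeries.coeff_sub, hbα i k (by omega), sub_self]

end FPSDA

/-- Transference (Corollary 4.2 of the paper): if
`⟨u₁α₁ + ⋯ + u_nα_n⟩ ≤ max (q^t · max_j ⟨M_j(u)⟩) (q^{-s} · ‖u‖)` for every polynomial
vector `u`, then there is a polynomial vector `b` with `‖b‖ ≤ q^t` and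
`⟨L_i(b) - α_i⟩ ≤ q^{-s}` for all `i`. -/
theorem transference_corollary {K : Type*} [Field K] [Fintype K] {m n : ℕ}
    (hm : 0 < m) (hn : 0 < n)
    (A : Matrix (Fin n) (Fin m) (FF K)) (α : Fin n → FF K)
    (s t : ℕ) (hs : 0 < s) (ht : 0 < t)
    (h : ∀ u : Fin n → Polynomial K,
      sdist (∑ i, polyF (u i) * α i) ≤
        max ((Fintype.card K : ℝ) ^ (t : ℤ) *
              ⨆ j, sdist (A.transpose.mulVec (fun i => polyF (u i)) j))
            ((Fintype.card K : ℝ) ^ (-(s : ℤ)) * pnorm u)) :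
    ∃ b : Fin m → Polynomial K, pnorm b ≤ (Fintype.card K : ℝ) ^ (t : ℤ) ∧
      ∀ i, sdist (A.mulVec (fun j => polyF (b j)) i - α i) ≤
        (Fintype.card K : ℝ) ^ (-(s : ℤ)) :=
  transference_corollary_general (Nat.one_lt_cast.mpr Fintype.one_lt_card) A α s t h
end
end
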